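/- arXiv:2103.04304 — 10 statements merged into one kernel-verified Lean document; each statement's English description precedes it below -/
import Mathlib

section
/- For every additive valuation v over a finite set M of indivisible goods, the AnyPrice share at entitlement 1/2 equals the maximin share for two agents: APS(1/2, v, M) = MMS_2(v, M). -/
open Finset

def IsPartition {ι : Type*} [DecidableEq ι] (M : Finset ι) {n : ℕ} (A : Fin n → Finset ι) : Prop :=
  (∀ i, A i ⊆ M) ∧ (∀ i j, i ≠ j → Disjoint (A i) (A j)) ∧ ∀ x ∈ M, ∃ i, x ∈ A i

/-- The AnyPrice share (price-based definition): the minimum over all nonnegative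
price vectors summing to 1 of the best value of an affordable bundle. -/
noncomputable def APS {ι : Type*} (b : ℝ) (v : Finset ι → ℝ) (M : Finset ι) : ℝ :=
  sInf {t : ℝ | ∃ p : ι → ℝ, (∀ j ∈ M, 0 ≤ p j) ∧ (∑ j ∈ M, p j) = 1 ∧
    t = sSup {u : ℝ | ∃ S, S ⊆ M ∧ (∑ j ∈ S, p j) ≤ b ∧ u = v S}}

/-- The maximin share for `n` agents: the maximum over partitions of `M` into `n`
bundles of the minimum bundle value. -/
noncomputable def MMS {ι : Type*} [DecidableEq ι] (n : ℕ) (v : Finset ι → ℝ) (M : Finset ι) : ℝ :=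
  sSup {t : ℝ | ∃ A : Fin n → Finset ι, IsPartition M A ∧ ∀ i, t ≤ v (A i)}

theorem exists_price {ι : Type*} [DecidableEq ι] (M : Finset ι) (hM : M.Nonempty)
    (w : ι → ℝ) (hw : ∀ j ∈ M, 0 ≤ w j) :
    ∃ p : ι → ℝ, (∀ j ∈ M, 0 ≤ p j) ∧ (∑ j ∈ M, p j) = 1 ∧
      ∀ S, S ⊆ M → (∑ j ∈ S, p j) ≤ 1 / 2 → ∑ j ∈ S, w j ≤ ∑ j ∈ M \ S, w j := by
  have h0 : 0 ≤ ∑ j ∈ M, w j := Finset.sum_nonneg hw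
  rcases h0.eq_or_lt with h | h
  · have hz := (Finset.sum_eq_zero_iff_of_nonneg hw).1 h.symm
    obtain ⟨x, hx⟩ := hM
    refine ⟨fun j => if j = x then 1 else 0, ?_, ?_, ?_⟩
    · intro j _
      dsimp only
      split_ifs <;> norm_num
    · simp [hx]
    · intro S hS _
      rw [Finset.sum_eq_zero (fun j hj => hz j (hS hj))]
      exact Finset.sum_nonneg (fun j hj => hw j (Finset.mem_sdiff.1 hj).1)
  · refine ⟨fun j => w j / ∑ j ∈ M, w j, fun j hj => div_nonneg (hw j hj) h0, ?_, ?_⟩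
    · rw [← Finset.sum_div, div_self h.ne']
    · intro S hS hp
      rw [← Finset.sum_div, div_le_iff₀ h] at hp
      have := Finset.sum_sdiff (f := w) hS
      linarith

/-- For every additive valuation, the AnyPrice share at entitlement `1/2` equals the
maximin share for two agents. -/
theorem aps_half_eq_mms_two {ι : Type*} [DecidableEq ι] (M : Finset ι)
    (w : ι → ℝ) (hw : ∀ j ∈ M, 0 ≤ w j) :
    APS (1 / 2) (fun S => ∑ j ∈ S, w j) M = MMS 2 (fun S => ∑ j ∈ S, w j) M := by
  have hsub : ∀ S, S ⊆ M → ∑ j ∈ S, w j ≤ ∑ j ∈ M, w j := fun S hS =>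
    Finset.sum_le_sum_of_subset_of_nonneg hS (fun j hj _ => hw j hj)
  have hnn : ∀ S, S ⊆ M → 0 ≤ ∑ j ∈ S, w j := fun S hS =>
    Finset.sum_nonneg (fun j hj => hw j (hS hj))
  have hpart : ∀ S, S ⊆ M → IsPartition M ![S, M \ S] := by
    intro S hS
    refine ⟨?_, ?_, ?_⟩
    · intro i; fin_cases i
      · simpa using hS
      · simp
    · intro i j hij
      fin_cases i <;> fin_cases j
      · exact absurd rfl hij
      · simpa using Finset.disjoint_sdiff
      · simpa using Finset.sdiff_disjoint
      · exact absurd rfl hij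
    · intro x hx
      by_cases h : x ∈ S
      · exact ⟨0, by simpa using h⟩
      · exact ⟨1, by simp [hx, h]⟩
  have hbdd : BddAbove {t : ℝ | ∃ A : Fin 2 → Finset ι, IsPartition M A ∧
      ∀ i, t ≤ ∑ j ∈ A i, w j} :=
    ⟨∑ j ∈ M, w j, by
      rintro t ⟨A, hA, ht⟩
      exact (ht 0).trans (hsub _ (hA.1 0))⟩
  have hne : Set.Nonempty {t : ℝ | ∃ A : Fin 2 → Finset ι, IsPartition M A ∧
      ∀ i, t ≤ ∑ j ∈ A i, w j} :=
    ⟨0, ![M, M \ M], hpart M (Finset.Subset.refl M), fun i =>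
      hnn _ ((hpart M (Finset.Subset.refl M)).1 i)⟩
  unfold APS MMS
  dsimp only
  rcases M.eq_empty_or_nonempty with rfl | hM
  · have h1 : {t : ℝ | ∃ p : ι → ℝ, (∀ j ∈ (∅ : Finset ι), 0 ≤ p j) ∧
        (∑ j ∈ (∅ : Finset ι), p j) = 1 ∧
        t = sSup {u : ℝ | ∃ S, S ⊆ (∅ : Finset ι) ∧ (∑ j ∈ S, p j) ≤ 1 / 2 ∧
          u = ∑ j ∈ S, w j}} = ∅ := by
      ext t; simp
    rw [h1, Real.sInf_empty]
    apply le_antisymm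
    · apply le_csSup hbdd
      exact ⟨![∅, ∅ \ ∅], hpart ∅ (Finset.Subset.refl _), fun i =>
        hnn _ ((hpart ∅ (Finset.Subset.refl _)).1 i)⟩
    · apply csSup_le hne
      rintro t ⟨A, hA, ht⟩
      simpa using (ht 0).trans (hsub _ (hA.1 0))
  · obtain ⟨p, hp0, hp1, hp⟩ := exists_price M hM w hw
    apply le_antisymm
    · refine le_trans (csInf_le ?_ ⟨p, hp0, hp1, rfl⟩) ?_
      · refine ⟨0, ?_⟩
        rintro t ⟨q, _, _, rfl⟩
        apply Real.sSup_nonneg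
        rintro u ⟨S, hS, _, rfl⟩
        exact hnn S hS
      · apply csSup_le
        · exact ⟨_, ∅, Finset.empty_subset M, by norm_num, rfl⟩
        rintro u ⟨S, hS, hb, rfl⟩
        apply le_csSup hbdd
        refine ⟨![S, M \ S], hpart S hS, ?_⟩
        intro i; fin_cases i
        · simp
        · simpa using hp S hS hb
    · apply csSup_le hne
      rintro t ⟨A, hA, ht⟩
      apply le_csInf
      · exact ⟨_, p, hp0, hp1, rfl⟩
      rintro s ⟨q, hq0, hq1, rfl⟩
      have hU : A 0 ∪ A 1 = M := by
        apply Finset.Subset.antisymm (Finset.union_subset (hA.1 0) (hA.1 1))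
        intro x hx
        obtain ⟨i, hi⟩ := hA.2.2 x hx
        fin_cases i
        · exact Finset.mem_union_left _ hi
        · exact Finset.mem_union_right _ hi
      have hs : ∑ j ∈ A 0, q j + ∑ j ∈ A 1, q j = 1 := by
        rw [← Finset.sum_union (hA.2.1 0 1 (by decide)), hU, hq1]
      have : ∃ i, ∑ j ∈ A i, q j ≤ 1 / 2 := by
        by_contra! hc
        linarith [hc 0, hc 1]
      obtain ⟨i, hi⟩ := this
      refine (ht i).trans (le_csSup ?_ ⟨A i, hA.1 i, hi, rfl⟩)
      refine ⟨∑ j ∈ M, w j, ?_⟩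
      rintro u ⟨S, hS, _, rfl⟩
      exact hsub S hS
end

section
/- For any setting with two agents having additive valuations v_1, v_2 over a finite set M of indivisible goods and arbitrary entitlements b_1, b_2 > 0 with b_1 + b_2 = 1, there exists an allocation (A_1, A_2) of M such that v_1(A_1) ≥ APS(b_1, v_1, M) and v_2(A_2) ≥ APS(b_2, v_2, M). -/
open Finset

lemma aps_le_bundle {ι : Type*} (M : Finset ι) (w : ι → ℝ) (hw : ∀ j ∈ M, 0 ≤ w j)
    (b : ℝ) (hb : 0 < b) (p : ι → ℝ) (hp : ∀ j ∈ M, 0 ≤ p j) (hp1 : ∑ j ∈ M, p j = 1) :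
    ∃ S, S ⊆ M ∧ ∑ j ∈ S, p j ≤ b ∧ APS b (fun S => ∑ j ∈ S, w j) M ≤ ∑ j ∈ S, w j := by
  classical
  have hne : (M.powerset.filter (fun S => ∑ j ∈ S, p j ≤ b)).Nonempty :=
    ⟨∅, by simp [hb.le]⟩
  obtain ⟨S, hS, hmax⟩ := Finset.exists_max_image _ (fun S => ∑ j ∈ S, w j) hne
  rw [Finset.mem_filter, Finset.mem_powerset] at hS
  refine ⟨S, hS.1, hS.2, ?_⟩
  have h1 : sSup {u : ℝ | ∃ S, S ⊆ M ∧ (∑ j ∈ S, p j) ≤ b ∧ u = ∑ j ∈ S, w j}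
      ≤ ∑ j ∈ S, w j := by
    refine csSup_le ⟨_, S, hS.1, hS.2, rfl⟩ ?_
    rintro u ⟨T, hT, hTb, rfl⟩
    exact hmax T (by rw [Finset.mem_filter, Finset.mem_powerset]; exact ⟨hT, hTb⟩)
  refine le_trans (csInf_le ⟨0, ?_⟩ ⟨p, hp, hp1, rfl⟩) h1
  rintro t ⟨q, -, -, rfl⟩
  apply Real.sSup_nonneg
  rintro u ⟨T, hT, -, rfl⟩
  exact Finset.sum_nonneg fun j hj => hw j (hT hj)

lemma aps_le_total {ι : Type*} (M : Finset ι) (w : ι → ℝ) (hw : ∀ j ∈ M, 0 ≤ w j)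
    (b : ℝ) (hb : 0 < b) : APS b (fun S => ∑ j ∈ S, w j) M ≤ ∑ j ∈ M, w j := by
  rcases M.eq_empty_or_nonempty with rfl | hM
  · simp [APS]
  · have hc : (0 : ℝ) < M.card := by exact_mod_cast hM.card_pos
    obtain ⟨S, hS, -, h⟩ := aps_le_bundle M w hw b hb (fun _ => (1 : ℝ) / M.card)
      (fun _ _ => by positivity) (by simp; field_simp)
    exact h.trans (Finset.sum_le_sum_of_subset_of_nonneg hS fun j hj _ => hw j hj)

/-- For two agents with additive valuations and arbitrary entitlements, there is an
allocation giving each agent at least her AnyPrice share. -/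
theorem two_agents_aps_allocation {ι : Type*} [DecidableEq ι] (M : Finset ι)
    (w₁ w₂ : ι → ℝ) (hw₁ : ∀ j ∈ M, 0 ≤ w₁ j) (hw₂ : ∀ j ∈ M, 0 ≤ w₂ j)
    (b₁ b₂ : ℝ) (hb₁ : 0 < b₁) (hb₂ : 0 < b₂) (hsum : b₁ + b₂ = 1) :
    ∃ A₁ A₂ : Finset ι, Disjoint A₁ A₂ ∧ A₁ ∪ A₂ = M ∧
      APS b₁ (fun S => ∑ j ∈ S, w₁ j) M ≤ ∑ j ∈ A₁, w₁ j ∧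
      APS b₂ (fun S => ∑ j ∈ S, w₂ j) M ≤ ∑ j ∈ A₂, w₂ j := by
  rcases (Finset.sum_nonneg hw₂).eq_or_lt with h0 | hpos
  · refine ⟨M, ∅, by simp, by simp, aps_le_total M w₁ hw₁ b₁ hb₁, ?_⟩
    have := aps_le_total M w₂ hw₂ b₂ hb₂
    rw [← h0] at this
    simpa using this
  · have hp : ∀ j ∈ M, 0 ≤ w₂ j / ∑ i ∈ M, w₂ i := fun j hj => div_nonneg (hw₂ j hj) hpos.le
    have hp1 : ∑ j ∈ M, w₂ j / ∑ i ∈ M, w₂ i = 1 := by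
      rw [← Finset.sum_div, div_self hpos.ne']
    obtain ⟨S, hS, hSb, hS1⟩ := aps_le_bundle M w₁ hw₁ b₁ hb₁ _ hp hp1
    obtain ⟨T, hT, hTb, hT1⟩ := aps_le_bundle M w₂ hw₂ b₂ hb₂ _ hp hp1
    refine ⟨S, M \ S, Finset.disjoint_sdiff, Finset.union_sdiff_of_subset hS, hS1, hT1.trans ?_⟩
    rw [← Finset.sum_div, div_le_iff₀ hpos] at hSb hTb
    have h3 := Finset.sum_sdiff (f := w₂) hS
    have h4 : b₁ * ∑ i ∈ M, w₂ i + b₂ * ∑ i ∈ M, w₂ i = ∑ i ∈ M, w₂ i := by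
      rw [← add_mul, hsum, one_mul]
    linarith
end

section
/- For every additive valuation v over a finite set M of indivisible goods and every entitlement b with 0 < b ≤ 1, the Truncated Proportional Share is at least the AnyPrice share: TPS(b, v, M) ≥ APS(b, v, M). -/
open Finset

/-- The truncated proportional share of an additive valuation with item values `w`:
the largest `z ≥ 0` with `b * ∑_{j ∈ M} min (w j) z = z`. -/
noncomputable def TPS {ι : Type*} (b : ℝ) (w : ι → ℝ) (M : Finset ι) : ℝ :=
  sSup {z : ℝ | 0 ≤ z ∧ b * ∑ j ∈ M, min (w j) z = z}

/-- For every additive valuation and entitlement `0 < b ≤ 1`, the truncated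
proportional share is at least the AnyPrice share. -/
theorem tps_ge_aps {ι : Type*} (M : Finset ι)
    (w : ι → ℝ) (hw : ∀ j ∈ M, 0 ≤ w j)
    (b : ℝ) (hb0 : 0 < b) (hb1 : b ≤ 1) :
    APS b (fun S => ∑ j ∈ S, w j) M ≤ TPS b w M := by
  have hT0 : 0 ≤ TPS b w M := Real.sSup_nonneg (fun z hz => hz.1)
  have hbdd : BddAbove {z : ℝ | 0 ≤ z ∧ b * ∑ j ∈ M, min (w j) z = z} := by
    refine ⟨b * ∑ j ∈ M, w j, ?_⟩
    rintro z ⟨_, hz⟩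
    rw [← hz]
    exact mul_le_mul_of_nonneg_left (Finset.sum_le_sum fun j _ => min_le_left _ _) hb0.le
  apply le_of_forall_gt_imp_ge_of_dense
  intro x hx
  have hx0 : 0 < x := lt_of_le_of_lt hT0 hx
  have hlt : b * ∑ j ∈ M, min (w j) x < x := by
    by_contra hcon
    push Not at hcon
    have hle : ∀ y, b * ∑ j ∈ M, min (w j) y ≤ b * ∑ j ∈ M, w j := fun y =>
      mul_le_mul_of_nonneg_left (Finset.sum_le_sum fun j _ => min_le_left _ _) hb0.le
    have hxW : x ≤ b * ∑ j ∈ M, w j := hcon.trans (hle x)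
    have hcont : ContinuousOn (fun y => b * ∑ j ∈ M, min (w j) y - y)
        (Set.Icc x (b * ∑ j ∈ M, w j)) := by
      apply Continuous.continuousOn
      fun_prop
    have h0 : (0:ℝ) ∈ Set.Icc
        ((fun y => b * ∑ j ∈ M, min (w j) y - y) (b * ∑ j ∈ M, w j))
        ((fun y => b * ∑ j ∈ M, min (w j) y - y) x) := by
      constructor
      · have := hle (b * ∑ j ∈ M, w j)
        simp only
        linarith
      · simp only
        linarith
    obtain ⟨y, hy, hy0⟩ := intermediate_value_Icc' hxW hcont h0
    simp only at hy0
    have : y ≤ TPS b w M := le_csSup hbdd ⟨hx0.le.trans hy.1, by linarith⟩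
    linarith [hy.1]
  have hm : ∀ j ∈ M, 0 ≤ min (w j) x := fun j hj => le_min (hw j hj) hx0.le
  rcases (Finset.sum_nonneg hm).eq_or_lt with h | hpos
  · have hz : ∀ j ∈ M, w j = 0 := by
      intro j hj
      have h1 := (Finset.sum_eq_zero_iff_of_nonneg hm).1 h.symm j hj
      rcases min_choice (w j) x with h2 | h2 <;> linarith
    refine le_trans (Real.sInf_nonpos ?_) hx0.le
    rintro t ⟨p, _, _, rfl⟩
    apply Real.sSup_nonpos
    rintro u ⟨S, hS, _, rfl⟩
    exact (Finset.sum_eq_zero fun j hj => hz j (hS hj)).le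
  · set T := ∑ j ∈ M, min (w j) x with hT
    have hbelow : BddBelow {t : ℝ | ∃ p : ι → ℝ, (∀ j ∈ M, 0 ≤ p j) ∧ (∑ j ∈ M, p j) = 1 ∧
        t = sSup {u : ℝ | ∃ S, S ⊆ M ∧ (∑ j ∈ S, p j) ≤ b ∧ u = ∑ j ∈ S, w j}} := by
      refine ⟨0, ?_⟩
      rintro t ⟨p, _, _, rfl⟩
      apply Real.sSup_nonneg
      rintro u ⟨S, hS, _, rfl⟩
      exact Finset.sum_nonneg fun j hj => hw j (hS hj)
    refine le_trans (csInf_le hbelow ⟨fun j => min (w j) x / T,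
      fun j hj => div_nonneg (hm j hj) hpos.le, ?_, rfl⟩) ?_
    · rw [← Finset.sum_div, ← hT, div_self hpos.ne']
    · apply Real.sSup_le _ hx0.le
      rintro u ⟨S, hS, hSb, rfl⟩
      rw [← Finset.sum_div, div_le_iff₀ hpos] at hSb
      have hSx : ∑ j ∈ S, min (w j) x < x := lt_of_le_of_lt hSb hlt
      have heq : ∑ j ∈ S, w j = ∑ j ∈ S, min (w j) x := by
        refine Finset.sum_congr rfl fun j hj => ?_
        have h1 : min (w j) x ≤ ∑ j ∈ S, min (w j) x :=
          Finset.single_le_sum (f := fun j => min (w j) x) (fun i hi => hm i (hS hi)) hj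
        rcases min_choice (w j) x with h2 | h2
        · exact h2.symm
        · linarith
      simp only
      linarith
end

section
/- For every positive integer n, there exists an instance with n agents having equal entitlements 1/n and identical additive valuations such that in every allocation at least one agent receives at most an n/(2n−1) fraction of her Truncated Proportional Share. Specifically, with 2n−1 items each of value 1/(2n−1) to every agent, every agent's TPS equals 1/n, yet in every allocation some agent receives value at most 1/(2n−1). -/
open Finset

/-- For every `n`, with `2n-1` identical items of value `1/(2n-1)` and `n` agents with
equal entitlements `1/n`, every agent's truncated proportional share is `1/n`, yet in
every allocation some agent gets value at most `1/(2n-1)`, i.e. an `n/(2n-1)` fraction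
of her truncated proportional share. -/
theorem tps_upper_bound_equal_entitlements (n : ℕ) (hn : 0 < n) :
    TPS (1 / (n : ℝ)) (fun _ => 1 / (2 * (n : ℝ) - 1)) (Finset.range (2 * n - 1))
      = 1 / (n : ℝ) ∧
    ∀ A : Fin n → Finset ℕ, IsPartition (Finset.range (2 * n - 1)) A →
      ∃ i, (∑ _j ∈ A i, 1 / (2 * (n : ℝ) - 1)) ≤ 1 / (2 * (n : ℝ) - 1) := by
  have h1 : (1 : ℝ) ≤ n := by exact_mod_cast hn
  have hpos : (0 : ℝ) < 2 * (n : ℝ) - 1 := by linarith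
  have hcast : ((2 * n - 1 : ℕ) : ℝ) = 2 * (n : ℝ) - 1 := by
    rw [Nat.cast_sub (by omega)]
    push_cast
    ring
  constructor
  · unfold TPS
    apply IsGreatest.csSup_eq
    constructor
    · refine ⟨by positivity, ?_⟩
      have hle : 1 / (2 * (n : ℝ) - 1) ≤ 1 / (n : ℝ) :=
        one_div_le_one_div_of_le (by linarith) (by linarith)
      beta_reduce
      rw [min_eq_left hle, Finset.sum_const, Finset.card_range, nsmul_eq_mul, hcast,
        mul_one_div_cancel hpos.ne', mul_one]
    · rintro z ⟨_, hz⟩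
      rw [← hz, Finset.sum_const, Finset.card_range, nsmul_eq_mul, hcast]
      have h2 : (2 * (n : ℝ) - 1) * min (1 / (2 * (n : ℝ) - 1)) z ≤ 1 := by
        calc _ ≤ (2 * (n : ℝ) - 1) * (1 / (2 * (n : ℝ) - 1)) :=
              mul_le_mul_of_nonneg_left (min_le_left _ _) hpos.le
          _ = 1 := mul_one_div_cancel hpos.ne'
      exact mul_le_of_le_one_right (by positivity) h2
  · rintro A ⟨hsub, hdis, _⟩
    have hex : ∃ i, (A i).card ≤ 1 := by
      by_contra! hc
      have hcard : (Finset.univ.biUnion A).card = ∑ i, (A i).card :=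
        Finset.card_biUnion (fun i _ j _ hij => hdis i j hij)
      have hle : (Finset.univ.biUnion A).card ≤ 2 * n - 1 := by
        have := Finset.card_le_card (Finset.biUnion_subset.2 (fun i (_ : i ∈ Finset.univ) => hsub i))
        simpa using this
      have hge : ∑ _i : Fin n, 2 ≤ ∑ i, (A i).card := Finset.sum_le_sum (fun i _ => hc i)
      simp at hge
      omega
    obtain ⟨i, hi⟩ := hex
    refine ⟨i, ?_⟩
    rw [Finset.sum_const, nsmul_eq_mul]
    exact mul_le_of_le_one_left (by positivity) (by exact_mod_cast hi)
end

section
/- There exists an instance with additive valuations and entitlements for which a competitive equilibrium (with entitlements as budgets) exists, yet no allocation gives every agent at least her Truncated Proportional Share (equivalently, her proportional share). Specifically, with two agents with entitlements b_1 = 0.4 and b_2 = 0.6 and three identical items each valued 1/3 by both agents: a competitive equilibrium exists, but in every allocation agent 1 receives value at most 1/3 < 0.4 = TPS(b_1, v_1, M). -/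
open Finset

/-- Competitive equilibrium: an allocation together with item prices such that every
agent's bundle is within her budget and is value-maximizing among affordable bundles. -/
def IsCE {ι : Type*} [DecidableEq ι] {n : ℕ} (v : Fin n → Finset ι → ℝ) (b : Fin n → ℝ)
    (M : Finset ι) (A : Fin n → Finset ι) (p : ι → ℝ) : Prop :=
  IsPartition M A ∧ (∀ j ∈ M, 0 ≤ p j) ∧
  (∀ i, ∑ j ∈ A i, p j ≤ b i) ∧
  ∀ i, ∀ S ⊆ M, (∑ j ∈ S, p j) ≤ b i → v i S ≤ v i (A i)

/-- An instance (two agents with entitlements 2/5 and 3/5, three identical items of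
value 1/3 to both) in which a competitive equilibrium exists, the truncated
proportional share of agent 1 is 2/5, yet no allocation gives every agent at least her
truncated proportional share. -/
theorem ce_exists_but_no_tps_allocation :
    (∃ (A : Fin 2 → Finset (Fin 3)) (p : Fin 3 → ℝ),
      IsCE (fun _ S => ∑ _j ∈ S, (1 : ℝ) / 3) ![2 / 5, 3 / 5] Finset.univ A p) ∧
    TPS (2 / 5) (fun _ : Fin 3 => (1 : ℝ) / 3) Finset.univ = 2 / 5 ∧
    ∀ A : Fin 2 → Finset (Fin 3), IsPartition Finset.univ A →
      ¬ (TPS (2 / 5) (fun _ : Fin 3 => (1 : ℝ) / 3) Finset.univ ≤ ∑ _j ∈ A 0, (1 : ℝ) / 3 ∧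
         TPS (3 / 5) (fun _ : Fin 3 => (1 : ℝ) / 3) Finset.univ ≤ ∑ _j ∈ A 1, (1 : ℝ) / 3) := by
  have tps : ∀ b : ℝ, 1 / 3 ≤ b → TPS b (fun _ : Fin 3 => (1 : ℝ) / 3) Finset.univ = b := by
    intro b hb
    have h : IsGreatest {z : ℝ | 0 ≤ z ∧ b * ∑ j ∈ (Finset.univ : Finset (Fin 3)),
        min ((fun _ : Fin 3 => (1 : ℝ) / 3) j) z = z} b := by
      constructor
      · refine ⟨by linarith, ?_⟩
        simp only [min_eq_left hb, Finset.sum_const, Finset.card_univ, Fintype.card_fin, nsmul_eq_mul]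
        push_cast
        ring
      · rintro z ⟨hz, h⟩
        simp only [Finset.sum_const, Finset.card_univ, Fintype.card_fin, nsmul_eq_mul] at h
        push_cast at h
        nlinarith [min_le_left (1 / 3 : ℝ) z]
    exact h.csSup_eq
  refine ⟨⟨![{0}, {1, 2}], fun _ => 3 / 10, ⟨by decide, by decide, by decide⟩, ?_, ?_, ?_⟩,
    tps _ (by norm_num), ?_⟩
  · intro j _
    norm_num
  · intro i
    fin_cases i
    · norm_num
    · have hc : (({1, 2} : Finset (Fin 3)).card) = 2 := by decide
      simp [hc]
      norm_num
  · intro i S _ h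
    simp only [Finset.sum_const, nsmul_eq_mul] at h ⊢
    fin_cases i
    · have h1 : (S.card : ℝ) < 2 := by
        simp at h
        linarith
      have h2 : S.card < 2 := by exact_mod_cast h1
      have h3 : (S.card : ℝ) ≤ 1 := by exact_mod_cast (by omega : S.card ≤ 1)
      simp
      linarith
    · have h1 : (S.card : ℝ) ≤ 2 := by
        simp at h
        linarith
      simp
      exact_mod_cast h1
  · rintro A ⟨_, hd, _⟩ ⟨h0, h1⟩
    rw [tps _ (by norm_num)] at h0 h1
    simp only [Finset.sum_const, nsmul_eq_mul] at h0 h1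
    have a0 : (1 : ℝ) < (A 0).card := by linarith
    have a1 : (1 : ℝ) < (A 1).card := by linarith
    have b0 : 1 < (A 0).card := by exact_mod_cast a0
    have b1 : 1 < (A 1).card := by exact_mod_cast a1
    have c := Finset.card_union_of_disjoint (hd 0 1 (by decide))
    have d := Finset.card_le_univ (A 0 ∪ A 1)
    simp only [Fintype.card_fin] at d
    omega
end

section
/- For any instance with n agents having additive valuations v_1,…,v_n over a finite set M of indivisible goods and entitlements b_1,…,b_n > 0 summing to 1, there exists an allocation (A_1,…,A_n) of M such that every agent i receives at least half her Truncated Proportional Share: v_i(A_i) ≥ (1/2)·TPS(b_i, v_i, M) for every agent i. -/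
open Finset

theorem half_tps_greedy {ι : Type*} [DecidableEq ι] {n : ℕ} (p : Fin n → ι → ℝ) (b : Fin n → ℝ) :
    ∀ (m : ℕ) (R : Finset ι), R.card = m → ∀ (S : Finset (Fin n)) (c : Fin n → ℝ),
    (∀ i ∈ S, 0 ≤ c i ∧ 2 * c i < b i) → (∀ i ∈ S, ∀ j ∈ R, 0 ≤ p i j ∧ c i + p i j ≤ b i) →
    (∀ k ∈ S, ∑ i ∈ S, (b i - c i) ≤ ∑ j ∈ R, p k j) →
    ∃ A : Fin n → Finset ι, (∀ i, A i ⊆ R) ∧ (∀ i j, i ≠ j → Disjoint (A i) (A j)) ∧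
      ∀ i ∈ S, b i ≤ 2 * (c i + ∑ j ∈ A i, p i j) := by
  intro m
  induction m with
  | zero =>
    intro R hR S c hc hp hs
    have hR0 : R = ∅ := Finset.card_eq_zero.mp hR
    subst hR0
    refine ⟨fun _ => ∅, by simp, by simp, ?_⟩
    intro i hi
    exfalso
    have h1 := hs i hi
    have h2 : 0 < ∑ i ∈ S, (b i - c i) :=
      Finset.sum_pos (fun k hk => by have := hc k hk; linarith) ⟨i, hi⟩
    simp only [Finset.sum_empty] at h1
    linarith
  | succ m ih =>
    intro R hR S c hc hp hs
    rcases S.eq_empty_or_nonempty with rfl | hS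
    · exact ⟨fun _ => ∅, by simp, by simp, by simp⟩
    have hRne : R.Nonempty := by
      rw [← Finset.card_pos]; omega
    obtain ⟨⟨i, j⟩, hij, hmax⟩ := Finset.exists_max_image (S ×ˢ R) (fun q => p q.1 q.2)
      (hS.product hRne)
    rw [Finset.mem_product] at hij
    obtain ⟨hi, hj⟩ := hij
    simp only at hi hj
    have hmax' : ∀ k ∈ S, ∀ l ∈ R, p k l ≤ p i j := fun k hk l hl =>
      hmax (k, l) (Finset.mem_product.mpr ⟨hk, hl⟩)
    have hcard : (R.erase j).card = m := by rw [Finset.card_erase_of_mem hj, hR]; rfl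
    have hRs : ∀ k, ∑ l ∈ R.erase j, p k l = ∑ l ∈ R, p k l - p k j := fun k => by
      have := Finset.sum_erase_add R (p k) hj
      linarith
    have hSs := Finset.sum_erase_add S (fun i => b i - c i) hi
    -- extension of an allocation
    have ext : ∀ A : Fin n → Finset ι, (∀ k, A k ⊆ R.erase j) →
        (∀ k l, k ≠ l → Disjoint (A k) (A l)) →
        (∀ k ∈ S, k ≠ i → b k ≤ 2 * (c k + ∑ l ∈ A k, p k l)) →
        (b i ≤ 2 * (c i + p i j + ∑ l ∈ A i, p i l)) →
        ∃ A : Fin n → Finset ι, (∀ i, A i ⊆ R) ∧ (∀ i j, i ≠ j → Disjoint (A i) (A j)) ∧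
        ∀ i ∈ S, b i ≤ 2 * (c i + ∑ j ∈ A i, p i j) := by
      intro A h1 h2 h3 h4
      have hjA : ∀ k, j ∉ A k := fun k h => by simpa using h1 k h
      have h1' : ∀ k, A k ⊆ R := fun k => (h1 k).trans (Finset.erase_subset _ _)
      refine ⟨fun k => if k = i then insert j (A k) else A k, ?_, ?_, ?_⟩
      · intro k
        dsimp only
        split_ifs
        · exact Finset.insert_subset hj (h1' k)
        · exact h1' k
      · intro k l hkl
        dsimp only
        split_ifs with e1 e2 e2
        · exact absurd (e1.trans e2.symm) hkl
        · exact Finset.disjoint_insert_left.mpr ⟨hjA l, h2 k l hkl⟩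
        · exact Finset.disjoint_insert_right.mpr ⟨hjA k, h2 k l hkl⟩
        · exact h2 k l hkl
      · intro k hk
        dsimp only
        split_ifs with e
        · subst e
          rw [Finset.sum_insert (hjA k)]
          linarith
        · exact h3 k hk e
    have hci := hc i hi
    have hpi := hp i hi j hj
    by_cases hd : b i ≤ 2 * (c i + p i j)
    · obtain ⟨A, h1, h2, h3⟩ := ih (R.erase j) hcard (S.erase i) c
        (fun k hk => hc k (Finset.mem_of_mem_erase hk))
        (fun k hk l hl => hp k (Finset.mem_of_mem_erase hk) l (Finset.mem_of_mem_erase hl))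
        (fun k hk => by
          have hk' := Finset.mem_of_mem_erase hk
          have := hs k hk'
          have := hmax' k hk' j hj
          rw [hRs]
          linarith)
      have key : ∃ B : Fin n → Finset ι, (∀ k, B k ⊆ R.erase j) ∧
        (∀ k l, k ≠ l → Disjoint (B k) (B l)) ∧
        (∀ k ∈ S, k ≠ i → b k ≤ 2 * (c k + ∑ l ∈ B k, p k l)) ∧
        (b i ≤ 2 * (c i + p i j + ∑ l ∈ B i, p i l)) := by
        refine ⟨A, h1, h2, fun k hk hki => h3 k (Finset.mem_erase.mpr ⟨hki, hk⟩), ?_⟩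
        have : 0 ≤ ∑ l ∈ A i, p i l := Finset.sum_nonneg fun l hl =>
          (hp i hi l (Finset.mem_of_mem_erase (h1 i hl))).1
        linarith
      obtain ⟨B, k1, k2, k3, k4⟩ := key
      exact ext B k1 k2 k3 k4
    · push Not at hd
      have hsum' : ∑ k ∈ S, (b k - Function.update c i (c i + p i j) k)
          = ∑ k ∈ S, (b k - c k) - p i j := by
        rw [← Finset.sum_erase_add S _ hi, ← hSs]
        have : ∑ k ∈ S.erase i, (b k - Function.update c i (c i + p i j) k)
          = ∑ k ∈ S.erase i, (b k - c k) := Finset.sum_congr rfl fun k hk => by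
            rw [Function.update_of_ne (Finset.ne_of_mem_erase hk)]
        rw [this, Function.update_self]
        ring
      obtain ⟨A, h1, h2, h3⟩ := ih (R.erase j) hcard S (Function.update c i (c i + p i j))
        (fun k hk => by
          by_cases e : k = i
          · subst e
            rw [Function.update_self]
            constructor <;> linarith
          · rw [Function.update_of_ne e]; exact hc k hk)
        (fun k hk l hl => by
          have hl' := Finset.mem_of_mem_erase hl
          by_cases e : k = i
          · subst e
            rw [Function.update_self]
            have := hmax' k hk l hl'
            exact ⟨(hp k hk l hl').1, by linarith⟩
          · rw [Function.update_of_ne e]; exact hp k hk l hl')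
        (fun k hk => by
          have := hs k hk
          have := hmax' k hk j hj
          rw [hRs, hsum']
          linarith)
      refine ext A h1 h2 (fun k hk hki => ?_) ?_
      · have := h3 k hk
        rwa [Function.update_of_ne hki] at this
      · have := h3 i hi
        rwa [Function.update_self] at this

theorem half_tps_spec {ι : Type*} (b : ℝ) (w : ι → ℝ) (M : Finset ι) (hb : 0 < b)
    (hw : ∀ j ∈ M, 0 ≤ w j) :
    0 ≤ TPS b w M ∧ b * ∑ j ∈ M, min (w j) (TPS b w M) = TPS b w M := by
  have hcl : IsClosed {z : ℝ | 0 ≤ z ∧ b * ∑ j ∈ M, min (w j) z = z} := by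
    apply IsClosed.inter
    · exact isClosed_le continuous_const continuous_id
    · exact isClosed_eq (by fun_prop) continuous_id
  refine hcl.csSup_mem ⟨0, le_refl 0, ?_⟩ ⟨b * ∑ j ∈ M, w j, ?_⟩
  · rw [Finset.sum_eq_zero (fun j hj => min_eq_right (hw j hj)), mul_zero]
  · rintro z ⟨_, hz⟩
    rw [← hz]
    gcongr
    exact min_le_left _ _

/-- For `n` agents with additive valuations and arbitrary entitlements summing to 1,
there is an allocation giving every agent at least half her truncated proportional
share. -/
theorem half_tps_allocation {ι : Type*} [DecidableEq ι] (n : ℕ)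
    (M : Finset ι) (w : Fin n → ι → ℝ) (b : Fin n → ℝ)
    (hw : ∀ i, ∀ j ∈ M, 0 ≤ w i j)
    (hb : ∀ i, 0 < b i) (hbsum : ∑ i, b i = 1) :
    ∃ A : Fin n → Finset ι, IsPartition M A ∧
      ∀ i, (1 / 2) * TPS (b i) (w i) M ≤ ∑ j ∈ A i, w i j := by
  have hspec := fun i => half_tps_spec (b i) (w i) M (hb i) (hw i)
  generalize ht : (fun i => TPS (b i) (w i) M) = t at *
  have ht' : ∀ i, TPS (b i) (w i) M = t i := fun i => congrFun ht i
  simp only [ht'] at hspec ⊢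
  obtain ⟨A, h1, h2, h3⟩ := half_tps_greedy (fun i j => b i / t i * min (w i j) (t i)) b M.card M rfl
    (Finset.univ.filter fun i => 0 < t i) (fun _ => 0)
    (fun i _ => ⟨le_refl _, by simpa using hb i⟩)
    (fun i hi j hj => by
      have hti : 0 < t i := by simpa using hi
      have := hb i
      refine ⟨mul_nonneg (by positivity) (le_min (hw i j hj) hti.le), ?_⟩
      rw [zero_add]
      calc b i / t i * min (w i j) (t i) ≤ b i / t i * t i := by
            gcongr
            exact min_le_right _ _
        _ = b i := by field_simp)
    (fun k hk => by
      have htk : 0 < t k := by simpa using hk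
      have e : ∑ j ∈ M, b k / t k * min (w k j) (t k) = 1 := by
        rw [← Finset.mul_sum, div_mul_eq_mul_div, (hspec k).2, div_self htk.ne']
      rw [e, ← hbsum]
      simp only [sub_zero]
      exact Finset.sum_le_sum_of_subset_of_nonneg (Finset.subset_univ _) fun i _ _ => (hb i).le)
  have hn : 0 < n := by
    rcases Nat.eq_zero_or_pos n with rfl | h
    · simp at hbsum
    · exact h
  let o : Fin n := ⟨0, hn⟩
  let L : Finset ι := M \ Finset.univ.biUnion A
  have hLd : ∀ k, Disjoint L (A k) := fun k =>
    Finset.disjoint_left.mpr fun x hx hxk =>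
      (Finset.mem_sdiff.mp hx).2 (Finset.mem_biUnion.mpr ⟨k, Finset.mem_univ _, hxk⟩)
  have hsub : ∀ k, A k ⊆ (if k = o then A k ∪ L else A k) := fun k => by
    split_ifs
    · exact Finset.subset_union_left
    · exact Finset.Subset.refl _
  have hsubM : ∀ k, (if k = o then A k ∪ L else A k) ⊆ M := fun k => by
    split_ifs
    · exact Finset.union_subset (h1 k) Finset.sdiff_subset
    · exact h1 k
  refine ⟨fun k => if k = o then A k ∪ L else A k, ⟨hsubM, ?_, ?_⟩, ?_⟩
  · intro k l hkl
    dsimp only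
    split_ifs with e1 e2 e2
    · exact absurd (e1.trans e2.symm) hkl
    · exact Finset.disjoint_union_left.mpr ⟨h2 k l hkl, hLd l⟩
    · exact Finset.disjoint_union_right.mpr ⟨h2 k l hkl, (hLd k).symm⟩
    · exact h2 k l hkl
  · intro x hx
    by_cases h : x ∈ Finset.univ.biUnion A
    · obtain ⟨k, _, hk⟩ := Finset.mem_biUnion.mp h
      exact ⟨k, hsub k hk⟩
    · refine ⟨o, ?_⟩
      simp only [if_true]
      exact Finset.mem_union_right _ (Finset.mem_sdiff.mpr ⟨hx, h⟩)
  · intro i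
    have hA : ∑ j ∈ A i, w i j ≤ ∑ j ∈ (if i = o then A i ∪ L else A i), w i j :=
      Finset.sum_le_sum_of_subset_of_nonneg (hsub i) fun j hj _ => hw i j (hsubM i hj)
    refine le_trans ?_ hA
    rcases (hspec i).1.eq_or_lt with h | h
    · rw [← h, mul_zero]
      exact Finset.sum_nonneg fun j hj => hw i j (h1 i hj)
    · have h4 := h3 i (by simpa using h)
      rw [← Finset.mul_sum, zero_add] at h4
      have h5 : ∑ j ∈ A i, min (w i j) (t i) ≤ ∑ j ∈ A i, w i j :=
        Finset.sum_le_sum fun j _ => min_le_left _ _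
      refine le_trans ?_ h5
      have hbi := hb i
      generalize ∑ j ∈ A i, min (w i j) (t i) = s at *
      have h6 : b i * t i ≤ b i * (2 * s) := by
        calc b i * t i ≤ (2 * (b i / t i * s)) * t i := by gcongr
          _ = b i * (2 * s) := by field_simp
      have := le_of_mul_le_mul_left h6 hbi
      linarith
end

section
/- For every additive valuation v over a finite set M of indivisible goods, every subset K ⊊ M, and every entitlement b with 0 < b ≤ 1/(|K|+1), it holds that TPS(b, v, M) ≤ TPS(b/(1 − |K|·b), v, M \ K). -/
open Finset

/-- Removing a proper subset `K` of items and rescaling the entitlement `b ≤ 1/(|K|+1)`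
to `b/(1-|K|·b)` can only increase the truncated proportional share. -/
theorem tps_remove_items {ι : Type*} [DecidableEq ι] (M K : Finset ι) (hK : K ⊂ M)
    (w : ι → ℝ) (hw : ∀ j ∈ M, 0 ≤ w j)
    (b : ℝ) (hb0 : 0 < b) (hb1 : b ≤ 1 / ((K.card : ℝ) + 1)) :
    TPS b w M ≤ TPS (b / (1 - (K.card : ℝ) * b)) w (M \ K) := by
  have hkb : 0 < 1 - (K.card : ℝ) * b := by
    rw [le_div_iff₀ (by positivity)] at hb1
    nlinarith
  set c := b / (1 - (K.card : ℝ) * b) with hc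
  have hc0 : 0 < c := div_pos hb0 hkb
  have hbd : BddAbove {z : ℝ | 0 ≤ z ∧ c * ∑ j ∈ M \ K, min (w j) z = z} := by
    refine ⟨c * ∑ j ∈ M \ K, w j, ?_⟩
    rintro z ⟨_, hz⟩
    rw [← hz]
    exact mul_le_mul_of_nonneg_left (Finset.sum_le_sum fun j _ => min_le_left _ _) hc0.le
  unfold TPS
  apply csSup_le
  · refine ⟨0, le_refl _, ?_⟩
    rw [Finset.sum_eq_zero, mul_zero]
    intro j hj
    exact min_eq_right (hw j hj)
  rintro z ⟨hz0, hz⟩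
  have hK1 : ∑ j ∈ K, min (w j) z ≤ (K.card : ℝ) * z := by
    have := Finset.sum_le_card_nsmul K (fun j => min (w j) z) z (fun j _ => min_le_right _ _)
    simpa [nsmul_eq_mul] using this
  have hsplit := Finset.sum_sdiff (f := fun j => min (w j) z) hK.subset
  have hfz : z ≤ c * ∑ j ∈ M \ K, min (w j) z := by
    rw [hc, div_mul_eq_mul_div, le_div_iff₀ hkb]
    rw [← hsplit] at hz
    nlinarith [mul_le_mul_of_nonneg_left hK1 hb0.le]
  have hB : ∀ y, c * ∑ j ∈ M \ K, min (w j) y ≤ c * ∑ j ∈ M \ K, w j := fun y =>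
    mul_le_mul_of_nonneg_left (Finset.sum_le_sum fun j _ => min_le_left _ _) hc0.le
  have hcont : Continuous fun y : ℝ => c * ∑ j ∈ M \ K, min (w j) y - y := by fun_prop
  have hivt := intermediate_value_Icc' (hfz.trans (hB z)) hcont.continuousOn
  obtain ⟨y, hy, hy0⟩ := hivt (show (0 : ℝ) ∈ _ from
    ⟨by simpa using hB _, by simpa using hfz⟩)
  exact hy.1.trans (le_csSup hbd ⟨hz0.trans hy.1, sub_eq_zero.mp hy0⟩)
end

section
/- For every additive valuation v over a finite set M of indivisible goods, every subset K ⊊ M, and every entitlement b with 0 < b < 1/|K|, it holds that APS(b, v, M) ≤ APS(b/(1 − |K|·b), v, M \ K). -/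
open Finset

/-- Removing a proper subset `K` of items and rescaling the entitlement `b < 1/|K|`
to `b/(1-|K|·b)` can only increase the AnyPrice share. -/
theorem aps_remove_items {ι : Type*} [DecidableEq ι] (M K : Finset ι) (hK : K ⊂ M)
    (w : ι → ℝ) (hw : ∀ j ∈ M, 0 ≤ w j)
    (b : ℝ) (hb0 : 0 < b) (hb1 : (K.card : ℝ) * b < 1) :
    APS b (fun S => ∑ j ∈ S, w j) M
      ≤ APS (b / (1 - (K.card : ℝ) * b)) (fun S => ∑ j ∈ S, w j) (M \ K) := by
  obtain ⟨j0, hj0M, hj0K⟩ := Finset.exists_of_ssubset hK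
  set k : ℝ := (K.card : ℝ) with hk
  have hk0 : 0 ≤ k := by positivity
  have hpos : 0 < 1 - k * b := by linarith
  unfold APS
  apply le_csInf
  · refine ⟨_, fun j => if j = j0 then 1 else 0, ?_, ?_, rfl⟩
    · intro j _
      dsimp only
      split_ifs <;> norm_num
    · rw [Finset.sum_ite_eq']
      simp [hj0M, hj0K]
  rintro t ⟨q, hq0, hq1, rfl⟩
  have hev : ∀ᶠ e in nhdsWithin (0:ℝ) (Set.Ioi 0), 0 < e ∧ 0 < 1 - k * b - k * e ∧
      ∀ S ∈ (M \ K).powerset, b < (∑ j ∈ S, q j) * (1 - k * b) →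
        b < (∑ j ∈ S, q j) * (1 - k * b - k * e) := by
    refine Filter.Eventually.and (eventually_mem_nhdsWithin) (Filter.Eventually.and ?_ ?_)
    · apply Filter.Eventually.filter_mono nhdsWithin_le_nhds
      have hc : ContinuousAt (fun e : ℝ => 1 - k * b - k * e) 0 := by fun_prop
      exact hc.eventually_const_lt (by simpa using hpos)
    · rw [Filter.eventually_all_finset]
      intro S _
      by_cases h : b < (∑ j ∈ S, q j) * (1 - k * b)
      · apply Filter.Eventually.filter_mono nhdsWithin_le_nhds
        have hc : ContinuousAt (fun e : ℝ => (∑ j ∈ S, q j) * (1 - k * b - k * e)) 0 := by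
          fun_prop
        filter_upwards [hc.eventually_const_lt (by simpa using h)] with e he _ using he
      · exact Filter.Eventually.of_forall fun e he => absurd he h
  obtain ⟨e, he0, he1, he2⟩ := hev.exists
  have hbdd : BddBelow {t : ℝ | ∃ p : ι → ℝ, (∀ j ∈ M, 0 ≤ p j) ∧ (∑ j ∈ M, p j) = 1 ∧
    t = sSup {u : ℝ | ∃ S, S ⊆ M ∧ (∑ j ∈ S, p j) ≤ b ∧ u = ∑ j ∈ S, w j}} := by
    refine ⟨0, ?_⟩
    rintro t ⟨p, _, _, rfl⟩
    apply Real.sSup_nonneg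
    rintro u ⟨S, hS, _, rfl⟩
    exact Finset.sum_nonneg fun j hj => hw j (hS hj)
  let p : ι → ℝ := fun j => if j ∈ K then b + e else (1 - k * b - k * e) * q j
  have hpK : ∀ j ∈ K, p j = b + e := fun j hj => by simp [p, hj]
  have hpN : ∀ j ∉ K, p j = (1 - k * b - k * e) * q j := fun j hj => by simp [p, hj]
  have hp0 : ∀ j ∈ M, 0 ≤ p j := by
    intro j hj
    by_cases h : j ∈ K
    · rw [hpK j h]; linarith
    · rw [hpN j h]; exact mul_nonneg he1.le (hq0 j (by simp [hj, h]))
  have hp1 : ∑ j ∈ M, p j = 1 := by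
    rw [← Finset.sum_sdiff hK.1, Finset.sum_congr rfl hpK,
      Finset.sum_congr rfl (fun j hj => hpN j (Finset.mem_sdiff.1 hj).2), ← Finset.mul_sum, hq1]
    simp only [Finset.sum_const, nsmul_eq_mul, ← hk]
    ring
  refine (csInf_le hbdd ⟨p, hp0, hp1, rfl⟩).trans ?_
  apply csSup_le_csSup
  · refine ⟨∑ j ∈ M, w j, ?_⟩
    rintro u ⟨S, hS, _, rfl⟩
    exact Finset.sum_le_sum_of_subset_of_nonneg (hS.trans Finset.sdiff_subset)
      fun j hj _ => hw j hj
  · exact ⟨_, ∅, by simp, by simpa using hb0.le, rfl⟩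
  · rintro u ⟨S, hS, hSb, rfl⟩
    have hSK : ∀ j ∈ S, j ∉ K := by
      intro j hj hjK
      have := Finset.single_le_sum (f := p) (fun i hi => hp0 i (hS hi)) hj
      rw [hpK j hjK] at this
      linarith
    have hSM : S ⊆ M \ K := fun j hj => Finset.mem_sdiff.2 ⟨hS hj, hSK j hj⟩
    refine ⟨S, hSM, ?_, rfl⟩
    rw [Finset.sum_congr rfl (fun j hj => hpN j (hSK j hj)), ← Finset.mul_sum] at hSb
    rw [le_div_iff₀ hpos]
    by_contra hcon
    have := he2 S (Finset.mem_powerset.2 hSM) (not_le.1 hcon)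
    linarith
end

section
/- For any instance with n agents having additive valuations v_1,…,v_n over a finite set M of indivisible goods and entitlements b_1,…,b_n > 0 summing to 1, there exists an allocation (A_1,…,A_n) of M with the following property: for every agent i and every positive integer k, if every subset of M containing at most k items has v_i-value at most the proportional share b_i·v_i(M), then v_i(A_i) ≥ (k/(k+1))·b_i·v_i(M). -/
open Finset

lemma bidding_aux {ι : Type*} [DecidableEq ι] {n : ℕ} (i0 : Fin n) (u : Fin n → ι → ℝ) (m : ℕ) :
    ∀ (R : Finset ι) (c : Fin n → ℝ), R.card = m →
      (∀ i, ∀ j ∈ R, 0 ≤ u i j) → (∀ i, 0 ≤ c i) →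
      ∃ A : Fin n → Finset ι, IsPartition R A ∧
        ∀ i, ∑ j, c j ≤ ∑ j ∈ R, u i j →
          (c i ≤ ∑ j ∈ A i, u i j) ∨
          ∃ T ⊆ A i, ∃ y ∈ R, y ∉ T ∧ (∀ t ∈ T, u i y ≤ u i t) ∧ c i < ∑ j ∈ T, u i j + u i y := by
  induction m with
  | zero =>
    intro R c hR hu hc
    obtain rfl := Finset.card_eq_zero.mp hR
    refine ⟨fun _ => ∅, ⟨by simp, by simp, by simp⟩, fun i hi => Or.inl ?_⟩
    have := Finset.single_le_sum (fun j _ => hc j) (Finset.mem_univ i)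
    simp at hi ⊢
    linarith
  | succ m ih =>
    intro R c hR hu hc
    by_cases hact : ∃ i, ∀ x ∈ R, u i x ≤ c i
    · obtain ⟨a, ha⟩ := hact
      have hRne : R.Nonempty := Finset.card_pos.mp (by omega)
      obtain ⟨x0, hx0⟩ := hRne
      classical
      let P : Finset (Fin n × ι) := (Finset.univ.filter (fun i => ∀ x ∈ R, u i x ≤ c i)) ×ˢ R
      have hP : P.Nonempty := ⟨(a, x0), by simp [P, hx0]; exact ha⟩
      obtain ⟨⟨i, x⟩, hix, hmax⟩ := Finset.exists_max_image P (fun p => u p.1 p.2) hP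
      have hi : ∀ x ∈ R, u i x ≤ c i := by
        have := (Finset.mem_product.mp hix).1
        simpa using this
      have hx : x ∈ R := (Finset.mem_product.mp hix).2
      have hmax' : ∀ j, (∀ x ∈ R, u j x ≤ c j) → ∀ y ∈ R, u j y ≤ u i x := by
        intro j hj y hy
        exact hmax (j, y) (by simp [P, hy]; exact hj)
      let c' : Fin n → ℝ := fun j => if j = i then c i - u i x else c j
      have hc'sum : ∑ j, c' j = ∑ j, c j - u i x := by
        have : ∀ j, c' j = c j - (if j = i then u i x else 0) := by
          intro j
          by_cases h : j = i
          · subst h; simp [c']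
          · simp [c', h]
        simp [this, Finset.sum_sub_distrib]
      obtain ⟨A, ⟨hA1, hA2, hA3⟩, hA⟩ := ih (R.erase x) c'
        (by rw [Finset.card_erase_of_mem hx]; omega)
        (fun j y hy => hu j y (Finset.mem_of_mem_erase hy))
        (by
          intro j
          by_cases h : j = i
          · subst h; simp [c', hi x hx]
          · simp [c', h, hc j])
      have hxA : ∀ j, x ∉ A j := fun j h => by simpa using hA1 j h
      refine ⟨fun j => if j = i then insert x (A i) else A j, ⟨?_, ?_, ?_⟩, ?_⟩
      · intro j
        by_cases h : j = i
        · simp only [h, if_true]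
          exact Finset.insert_subset hx ((hA1 i).trans (Finset.erase_subset _ _))
        · simp only [h, if_false]
          exact (hA1 j).trans (Finset.erase_subset _ _)
      · intro j l hjl
        have hd := hA2 j l hjl
        by_cases h : j = i
        · have h2 : l ≠ i := fun h' => hjl (h.trans h'.symm)
          subst h
          simp [h2, hxA, hd]
        · by_cases h2 : l = i
          · subst h2
            simp [h, hxA, hd]
          · simp [h, h2, hd]
      · intro y hy
        by_cases h : y = x
        · exact ⟨i, by simp [h]⟩
        · obtain ⟨j, hj⟩ := hA3 y (Finset.mem_erase.mpr ⟨h, hy⟩)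
          refine ⟨j, ?_⟩
          by_cases h2 : j = i
          · subst h2; simp [hj]
          · simp [h2, hj]
      · intro j hj
        by_cases hja : ∀ x ∈ R, u j x ≤ c j
        · have h1 := hmax' j hja x hx
          have h2 := Finset.add_sum_erase R (u j) hx
          have h3 := hA j (by rw [hc'sum]; linarith)
          by_cases h : j = i
          · subst h
            simp only [c', if_true] at h3 ⊢
            rcases h3 with h3 | ⟨T, hT, y, hy, hyT, hTy, hlt⟩
            · left
              rw [Finset.sum_insert (hxA j)]
              linarith
            · right
              refine ⟨insert x T, Finset.insert_subset_insert _ hT, y, Finset.mem_of_mem_erase hy, ?_, ?_, ?_⟩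
              · simp [hyT, Finset.ne_of_mem_erase hy]
              · intro t ht
                rcases Finset.mem_insert.mp ht with rfl | ht
                · exact hmax' j hja y (Finset.mem_of_mem_erase hy)
                · exact hTy t ht
              · rw [Finset.sum_insert (fun h => hxA j (hT h))]
                linarith
          · simp only [c', h, if_false] at h3 ⊢
            rcases h3 with h3 | ⟨T, hT, y, hy, hr⟩
            · exact Or.inl h3
            · exact Or.inr ⟨T, hT, y, Finset.mem_of_mem_erase hy, hr⟩
        · push Not at hja
          obtain ⟨y, hy, hlt⟩ := hja
          exact Or.inr ⟨∅, by simp, y, hy, by simp, by simp, by simpa using hlt⟩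
    · push Not at hact
      refine ⟨fun j => if j = i0 then R else ∅, ⟨?_, ?_, ?_⟩, ?_⟩
      · intro j
        by_cases h : j = i0 <;> simp [h]
      · intro j l hjl
        by_cases h : j = i0
        · have h2 : l ≠ i0 := fun h' => hjl (h.trans h'.symm)
          simp [h2]
        · simp [h]
      · intro y hy
        exact ⟨i0, by simp [hy]⟩
      · intro j _
        obtain ⟨y, hy, hlt⟩ := hact j
        exact Or.inr ⟨∅, by simp, y, hy, by simp, by simp, by simpa using hlt⟩

/-- For `n` agents with additive valuations and arbitrary entitlements summing to 1,
there is an allocation such that for every agent `i` and every positive integer `k`: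
if no subset of at most `k` items has value exceeding the proportional share
`bᵢ·vᵢ(M)`, then agent `i` receives at least a `k/(k+1)` fraction of her proportional
share. -/
theorem proportional_fraction_allocation {ι : Type*} [DecidableEq ι] (n : ℕ)
    (M : Finset ι) (w : Fin n → ι → ℝ) (b : Fin n → ℝ)
    (hw : ∀ i, ∀ j ∈ M, 0 ≤ w i j)
    (hb : ∀ i, 0 < b i) (hbsum : ∑ i, b i = 1) :
    ∃ A : Fin n → Finset ι, IsPartition M A ∧
      ∀ i, ∀ k : ℕ, 0 < k →
        (∀ S ⊆ M, S.card ≤ k → (∑ j ∈ S, w i j) ≤ b i * ∑ j ∈ M, w i j) →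
        ((k : ℝ) / ((k : ℝ) + 1)) * (b i * ∑ j ∈ M, w i j) ≤ ∑ j ∈ A i, w i j := by
  have hn : 0 < n := by
    rcases Nat.eq_zero_or_pos n with h | h
    · subst h; simp at hbsum
    · exact h
  obtain ⟨A, hA, h⟩ := bidding_aux ⟨0, hn⟩ (fun i j => w i j / ∑ l ∈ M, w i l) M.card M b rfl
    (fun i j hj => div_nonneg (hw i j hj) (Finset.sum_nonneg (hw i))) (fun i => (hb i).le)
  refine ⟨A, hA, fun i k hk hS => ?_⟩
  have hk' : (0 : ℝ) < k := by exact_mod_cast hk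
  have hApos : 0 ≤ ∑ j ∈ A i, w i j := Finset.sum_nonneg (fun j hj => hw i j (hA.1 i hj))
  have hfrac : (k : ℝ) / ((k : ℝ) + 1) ≤ 1 := by
    rw [div_le_one (by positivity)]; linarith
  rcases (Finset.sum_nonneg (hw i)).eq_or_lt with hW | hW
  · rw [← hW]; simpa using hApos
  have hi := h i (by rw [← Finset.sum_div, div_self hW.ne', hbsum])
  simp only [← Finset.sum_div] at hi
  rcases hi with hi | ⟨T, hT, y, hy, hyT, hTy, hlt⟩
  · rw [le_div_iff₀ hW] at hi
    refine le_trans ?_ hi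
    exact mul_le_of_le_one_left (mul_nonneg (hb i).le hW.le) hfrac
  · rw [← add_div, lt_div_iff₀ hW] at hlt
    have hTM : T ⊆ M := hT.trans (hA.1 i)
    have hcard : k ≤ T.card := by
      by_contra hcon
      have := hS (insert y T) (Finset.insert_subset hy hTM)
        (by rw [Finset.card_insert_of_notMem hyT]; omega)
      rw [Finset.sum_insert hyT] at this
      linarith
    have hTA : ∑ j ∈ T, w i j ≤ ∑ j ∈ A i, w i j :=
      Finset.sum_le_sum_of_subset_of_nonneg hT (fun j hj _ => hw i j (hA.1 i hj))
    have hmul : (T.card : ℝ) * w i y ≤ ∑ j ∈ T, w i j := by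
      have := Finset.card_nsmul_le_sum T (w i) (w i y)
        (fun t ht => (div_le_div_iff_of_pos_right hW).mp (hTy t ht))
      simpa using this
    have hkT : (k : ℝ) * w i y ≤ (T.card : ℝ) * w i y :=
      mul_le_mul_of_nonneg_right (by exact_mod_cast hcard) (hw i y hy)
    refine le_trans ?_ hTA
    rw [div_mul_eq_mul_div, div_le_iff₀ (by positivity)]
    have := mul_le_mul_of_nonneg_left hlt.le hk'.le
    linarith
end

section
/- For any instance with n agents having identical additive valuations (v_i = v for every agent i) over a finite set M of indivisible goods and equal entitlements 1/n, there exists an allocation (A_1,…,A_n) of M such that every agent receives strictly more than a 3/4 fraction of her AnyPrice share: v(A_i) > (3/4)·APS(1/n, v, M) for every agent i (provided APS(1/n, v, M) > 0). -/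
open Finset

namespace APSProof

def SCheck (ι : Type*) (g : ℝ → ℝ) : Prop :=
  (∀ x, 0 ≤ x → 0 ≤ g x) ∧
  ∀ (S : Finset ι) (x : ι → ℝ), (∀ j ∈ S, 0 ≤ x j) → 1 ≤ ∑ j ∈ S, x j → 1 ≤ ∑ j ∈ S, g (x j)

lemma min_sum {ι : Type*} (S : Finset ι) (x : ι → ℝ) (k c : ℝ) (hk : 0 ≤ k)
    (hc : 0 ≤ c) (g : ℝ → ℝ) (hg : ∀ y, 0 ≤ y → min (k * y) c ≤ g y)
    (hx : ∀ j ∈ S, 0 ≤ x j) : min (k * ∑ j ∈ S, x j) c ≤ ∑ j ∈ S, g (x j) := by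
  classical
  induction S using Finset.induction_on with
  | empty => simp [hc]
  | insert a S ha ih =>
    rw [sum_insert ha, sum_insert ha]
    have h1 := ih (fun j hj => hx j (mem_insert_of_mem hj))
    have h0 := hx a (mem_insert_self a S)
    have h2 := hg _ h0
    have h3 : 0 ≤ ∑ j ∈ S, x j := sum_nonneg (fun j hj => hx j (mem_insert_of_mem hj))
    have h4 := mul_nonneg hk h0
    have h5 := mul_nonneg hk h3
    rw [mul_add]
    rcases min_cases (k * x a) c with h | h <;>
    rcases min_cases (k * ∑ j ∈ S, x j) c with h' | h' <;>
    rcases min_cases (k * x a + k * ∑ j ∈ S, x j) c with h'' | h'' <;> linarith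

lemma lin_sum {ι : Type*} (S : Finset ι) (x : ι → ℝ) (k c : ℝ)
    (g : ℝ → ℝ) (hg : ∀ y, 0 ≤ y → min (k * y) c ≤ g y)
    (hx : ∀ j ∈ S, 0 ≤ x j) (hs : ∀ j ∈ S, k * x j ≤ c) :
    k * ∑ j ∈ S, x j ≤ ∑ j ∈ S, g (x j) := by
  rw [mul_sum]
  apply sum_le_sum
  intro j hj
  have := hg _ (hx j hj)
  rwa [min_eq_left (hs j hj)] at this

lemma big_case {ι : Type*} (g : ℝ → ℝ) (hg0 : ∀ x, 0 ≤ x → 0 ≤ g x)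
    (S : Finset ι) (x : ι → ℝ) (hx : ∀ j ∈ S, 0 ≤ x j) (i : ι) (hi : i ∈ S)
    (h : 1 ≤ g (x i)) : 1 ≤ ∑ j ∈ S, g (x j) :=
  h.trans (single_le_sum (f := fun j => g (x j)) (fun j hj => hg0 _ (hx j hj)) hi)

/-- price for the case without overfull bins -/
noncomputable def gN (x : ℝ) : ℝ := if 3 / 4 < x then 1 else x

lemma gN_check (ι : Type*) : SCheck ι gN := by
  have h0 : ∀ x, 0 ≤ x → 0 ≤ gN x := by
    intro x hx; unfold gN; split_ifs <;> linarith
  refine ⟨h0, fun S x hx h1 => ?_⟩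
  by_cases hb : ∃ i ∈ S, 3 / 4 < x i
  · obtain ⟨i, hi, hb⟩ := hb
    exact big_case gN h0 S x hx i hi (by simp [gN, hb])
  · push Not at hb
    refine h1.trans (sum_le_sum fun j hj => ?_)
    simp [gN, not_lt.2 (hb j hj)]

/-- half price -/
noncomputable def gH (b a x : ℝ) : ℝ :=
  if 3 / 4 < x then 1 else min (b * x) (1 / 2) + max 0 (b * (x - a))

lemma gH_min (b a y : ℝ) : min (b * y) (1 / 2) ≤ gH b a y := by
  unfold gH
  split_ifs
  · linarith [min_le_right (b * y) (1 / 2)]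
  · linarith [le_max_left 0 (b * (y - a))]

lemma gH_check (ι : Type*) (b a : ℝ) (ha : 1 / 2 ≤ a) (hb : b * (1 - a) = 1 / 2)
    (hb1 : 1 ≤ b) : SCheck ι (gH b a) := by
  classical
  have hb0 : 0 ≤ b := by linarith
  have h0 : ∀ x, 0 ≤ x → 0 ≤ gH b a x := by
    intro x hx
    refine le_trans (le_min ?_ ?_) (gH_min b a x)
    · positivity
    · norm_num
  refine ⟨h0, fun S x hx h1 => ?_⟩
  have hmin : ∀ y, 0 ≤ y → min (b * y) (1 / 2) ≤ gH b a y := fun y _ => gH_min b a y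
  by_cases hbig : ∃ i ∈ S, 3 / 4 < x i
  · obtain ⟨i, hi, hbig⟩ := hbig
    exact big_case _ h0 S x hx i hi (by simp [gH, hbig])
  push Not at hbig
  by_cases hw : ∃ i ∈ S, 1 - a ≤ x i
  · obtain ⟨i, hi, hw⟩ := hw
    rw [← add_sum_erase S _ hi] at h1 ⊢
    have hR := min_sum (S.erase i) x b (1 / 2) hb0 (by norm_num) (gH b a) hmin
      (fun j hj => hx j (mem_of_mem_erase hj))
    have e1 : b * (1 - x i) ≤ b * ∑ j ∈ S.erase i, x j :=
      mul_le_mul_of_nonneg_left (by linarith) hb0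
    have e2 : b * (1 - a) ≤ b * x i := mul_le_mul_of_nonneg_left hw hb0
    have e3 : gH b a (x i) = 1 / 2 + max 0 (b * (x i - a)) := by
      rw [gH, if_neg (not_lt.2 (hbig i hi)), min_eq_right (by linarith)]
    rw [e3]
    rcases min_cases (b * ∑ j ∈ S.erase i, x j) (1 / 2) with h | h
    · have := le_max_right 0 (b * (x i - a))
      nlinarith
    · have := le_max_left 0 (b * (x i - a))
      linarith
  · push Not at hw
    have hR := lin_sum S x b (1 / 2) (gH b a) hmin hx (fun j hj => by
      have : b * x j ≤ b * (1 - a) := mul_le_mul_of_nonneg_left (hw j hj).le hb0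
      linarith)
    nlinarith

/-- third price -/
noncomputable def gT (k d x : ℝ) : ℝ :=
  if 3 / 4 < x then 1 else min (k * x) (1 / 3) + max 0 (min (k * (x - (1 / 2 - d))) (1 / 3))

lemma gT_min (k d y : ℝ) : min (k * y) (1 / 3) ≤ gT k d y := by
  unfold gT
  split_ifs
  · linarith [min_le_right (k * y) (1 / 3)]
  · linarith [le_max_left 0 (min (k * (y - (1 / 2 - d))) (1 / 3))]

lemma gT_check (ι : Type*) (k d : ℝ) (hd : 0 < d) (hd8 : d ≤ 1 / 8) (hk : k * d = 1 / 6) :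
    SCheck ι (gT k d) := by
  classical
  have hk1 : 4 / 3 ≤ k := by
    by_contra h
    push Not at h
    nlinarith
  have hk0 : 0 ≤ k := by linarith
  have h0 : ∀ x, 0 ≤ x → 0 ≤ gT k d x := by
    intro x hx
    refine le_trans (le_min ?_ ?_) (gT_min k d x)
    · positivity
    · norm_num
  refine ⟨h0, fun S x hx h1 => ?_⟩
  have hmin : ∀ y, 0 ≤ y → min (k * y) (1 / 3) ≤ gT k d y := fun y _ => gT_min k d y
  -- rest lemmas
  have rest : ∀ R ⊆ S, ∀ y, y ≤ ∑ j ∈ R, x j → k * y ≤ 1 / 3 → k * y ≤ ∑ j ∈ R, gT k d (x j) := by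
    intro R hR y hy hy3
    refine le_trans (le_min (mul_le_mul_of_nonneg_left hy hk0) hy3)
      (min_sum R x k (1 / 3) hk0 (by norm_num) _ hmin (fun j hj => hx j (hR hj)))
  have restl : ∀ R ⊆ S, (∀ j ∈ R, x j < 2 * d) → k * ∑ j ∈ R, x j ≤ ∑ j ∈ R, gT k d (x j) := by
    intro R hR hs
    refine lin_sum R x k (1 / 3) _ hmin (fun j hj => hx j (hR hj)) (fun j hj => ?_)
    have := mul_le_mul_of_nonneg_left (hs j hj).le hk0
    linarith
  have g13 : ∀ y, 2 * d ≤ y → 1 / 3 ≤ gT k d y := by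
    intro y hy
    refine le_trans (le_min ?_ le_rfl) (gT_min k d y)
    have := mul_le_mul_of_nonneg_left hy hk0
    linarith
  by_cases hbig : ∃ i ∈ S, 3 / 4 < x i
  · obtain ⟨i, hi, hbig⟩ := hbig
    exact big_case _ h0 S x hx i hi (by simp [gT, hbig])
  push Not at hbig
  by_cases hL : ∃ i ∈ S, 1 / 2 + d ≤ x i
  · obtain ⟨i, hi, hL⟩ := hL
    have hbi := hbig i hi
    rw [← add_sum_erase S _ hi] at h1 ⊢
    have := rest (S.erase i) (erase_subset _ _) (2 * d) (by linarith) (by linarith)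
    have e : gT k d (x i) = 2 / 3 := by
      rw [gT, if_neg (not_lt.2 hbi), min_eq_right (by nlinarith), min_eq_right (by nlinarith)]
      norm_num
    rw [e]; linarith
  push Not at hL
  have gmid : ∀ i ∈ S, 1 / 2 - d < x i → gT k d (x i) = 1 / 3 + k * (x i - (1 / 2 - d)) := by
    intro i hi h
    have h2 := hL i hi
    rw [gT, if_neg (not_lt.2 (hbig i hi)), min_eq_right (by nlinarith), min_eq_left (by nlinarith),
      max_eq_right (by nlinarith)]
  by_cases hM : ∃ i ∈ S, 1 / 2 - d < x i
  · obtain ⟨i, hi, hM⟩ := hM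
    have hLi := hL i hi
    have ei := gmid i hi hM
    rw [← add_sum_erase S _ hi] at h1 ⊢
    rw [ei]
    by_cases hM2 : ∃ j ∈ S.erase i, 1 / 2 - d < x j
    · obtain ⟨j, hj, hM2⟩ := hM2
      have ej := gmid j (mem_of_mem_erase hj) hM2
      rw [← add_sum_erase (S.erase i) _ hj] at h1 ⊢
      rw [ej]
      have := rest ((S.erase i).erase j) ((erase_subset _ _).trans (erase_subset _ _))
        (1 - x i - x j) (by linarith) (by nlinarith)
      nlinarith
    push Not at hM2
    by_cases hs : ∃ j ∈ S.erase i, 2 * d ≤ x j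
    · obtain ⟨j, hj, hs⟩ := hs
      have hMj := hM2 j hj
      rw [← add_sum_erase (S.erase i) _ hj] at h1 ⊢
      have := rest ((S.erase i).erase j) ((erase_subset _ _).trans (erase_subset _ _))
        (1 / 2 + d - x i) (by linarith) (by nlinarith)
      have := g13 _ hs
      nlinarith
    · push Not at hs
      have := restl (S.erase i) (erase_subset _ _) hs
      have e : k * (1 - x i) ≤ k * ∑ j ∈ S.erase i, x j :=
        mul_le_mul_of_nonneg_left (by linarith) hk0
      nlinarith
  push Not at hM
  by_cases hs : ∃ i ∈ S, 2 * d ≤ x i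
  · obtain ⟨i, hi, hs⟩ := hs
    have hMi := hM i hi
    have gi := g13 _ hs
    rw [← add_sum_erase S _ hi] at h1 ⊢
    by_cases hs2 : ∃ j ∈ S.erase i, 2 * d ≤ x j
    · obtain ⟨j, hj, hs2⟩ := hs2
      have hMj := hM j (mem_of_mem_erase hj)
      have gj := g13 _ hs2
      rw [← add_sum_erase (S.erase i) _ hj] at h1 ⊢
      have := rest ((S.erase i).erase j) ((erase_subset _ _).trans (erase_subset _ _))
        (2 * d) (by linarith) (by linarith)
      linarith
    · push Not at hs2
      have := restl (S.erase i) (erase_subset _ _) hs2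
      have e : k * (1 / 2 + d) ≤ k * ∑ j ∈ S.erase i, x j :=
        mul_le_mul_of_nonneg_left (by linarith) hk0
      nlinarith
  · push Not at hs
    have := restl S Subset.rfl hs
    nlinarith

/-! Greedy (LPT) allocation. -/

/-- `F`-weight of bin `i` before time `T`. -/
noncomputable def ld {n : ℕ} (σ : ℕ → Fin n) (F : ℕ → ℝ) (T : ℕ) (i : Fin n) : ℝ :=
  ∑ t ∈ (range T).filter (fun t => σ t = i), F t

variable {n : ℕ}

lemma ld_zero (σ : ℕ → Fin n) (F : ℕ → ℝ) (i : Fin n) : ld σ F 0 i = 0 := by simp [ld]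

lemma ld_succ_self (σ : ℕ → Fin n) (F : ℕ → ℝ) (T : ℕ) :
    ld σ F (T + 1) (σ T) = ld σ F T (σ T) + F T := by
  unfold ld
  rw [range_add_one, filter_insert, if_pos rfl, sum_insert (by simp), add_comm]

lemma ld_succ_ne (σ : ℕ → Fin n) (F : ℕ → ℝ) (T : ℕ) (i : Fin n) (h : σ T ≠ i) :
    ld σ F (T + 1) i = ld σ F T i := by
  unfold ld
  rw [range_add_one, filter_insert, if_neg h]

lemma ld_mono (σ : ℕ → Fin n) (F : ℕ → ℝ) (hF : ∀ t, 0 ≤ F t) (i : Fin n) {T T' : ℕ}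
    (h : T ≤ T') : ld σ F T i ≤ ld σ F T' i := by
  unfold ld
  apply sum_le_sum_of_subset_of_nonneg
  · exact filter_subset_filter _ (range_subset_range.2 h)
  · intros; exact hF _

lemma sum_ld (σ : ℕ → Fin n) (F : ℕ → ℝ) (T : ℕ) :
    ∑ i, ld σ F T i = ∑ t ∈ range T, F t := by
  unfold ld
  exact sum_fiberwise _ _ _

lemma ld_congr (σ σ' : ℕ → Fin n) (F : ℕ → ℝ) (T : ℕ) (i : Fin n) (h : ∀ t < T, σ t = σ' t) :
    ld σ F T i = ld σ' F T i := by
  unfold ld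
  congr 1
  apply filter_congr
  intro t ht
  rw [h t (mem_range.1 ht)]

lemma exists_greedy (hn : 0 < n) (v : ℕ → ℝ) (m : ℕ) :
    ∃ σ : ℕ → Fin n, ∀ t < m, ∀ i, ld σ v t (σ t) ≤ ld σ v t i := by
  haveI : Nonempty (Fin n) := ⟨⟨0, hn⟩⟩
  induction m with
  | zero => exact ⟨fun _ => ⟨0, hn⟩, by simp⟩
  | succ m ih =>
    obtain ⟨σ, hσ⟩ := ih
    obtain ⟨i0, hi0⟩ := Finite.exists_min (fun i => ld σ v m i)
    refine ⟨Function.update σ m i0, fun t ht i => ?_⟩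
    have hc : ∀ j, ld (Function.update σ m i0) v t j = ld σ v t j := by
      intro j
      apply ld_congr
      intro r hr
      rw [Function.update_of_ne (by omega)]
    rw [hc, hc]
    rcases Nat.lt_succ_iff_lt_or_eq.1 ht with h | h
    · rw [Function.update_of_ne (by omega)]
      exact hσ t h i
    · subst h
      rw [Function.update_self]
      exact hi0 i

lemma fresh (σ : ℕ → Fin n) (v : ℕ → ℝ) (hv : ∀ t, 0 ≤ v t) (ha : Antitone v) (T : ℕ)
    (i : Fin n) : (∀ F : ℕ → ℝ, ld σ F T i = 0) ∨ v T ≤ ld σ v T i := by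
  by_cases h : ∃ t < T, σ t = i
  · right
    obtain ⟨t, ht, hi⟩ := h
    refine (ha ht.le).trans ?_
    unfold ld
    exact single_le_sum (f := v) (fun j _ => hv j) (by simp [ht, hi])
  · left
    push Not at h
    intro F
    unfold ld
    rw [filter_false_of_mem (fun t ht => h t (mem_range.1 ht)), sum_empty]

/-- generic invariant principle -/
lemma inv_step (σ : ℕ → Fin n) (I : ℕ → Fin n → Prop) (a b : ℕ) (h0 : ∀ i, I a i)
    (hs : ∀ T, a ≤ T → T < b → I T (σ T) → I (T + 1) (σ T))
    (hne : ∀ T, a ≤ T → T < b → ∀ i, σ T ≠ i → I T i → I (T + 1) i) :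
    ∀ T, a ≤ T → T ≤ b → ∀ i, I T i := by
  intro T haT
  induction T, haT using Nat.le_induction with
  | base => intro _; exact h0
  | succ T hT ih =>
    intro hb i
    by_cases h : σ T = i
    · subst h; exact hs T hT (by omega) (ih (by omega) _)
    · exact hne T hT (by omega) i h (ih (by omega) i)

lemma finish (σ : ℕ → Fin n) (F : ℕ → ℝ) (m : ℕ) (i0 : Fin n) (h : ∀ i, ld σ F m i ≤ 1)
    (h0 : ld σ F m i0 < 1) : ∑ t ∈ range m, F t < n := by
  rw [← sum_ld σ F m]
  calc ∑ i, ld σ F m i < ∑ i : Fin n, (1 : ℝ) :=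
        sum_lt_sum (fun i _ => h i) ⟨i0, mem_univ _, h0⟩
    _ = n := by simp

theorem core (ι : Type*) (v : ℕ → ℝ) (hv : ∀ t, 0 ≤ v t) (ha : Antitone v) (m : ℕ)
    (σ : ℕ → Fin n) (hσ : ∀ t < m, ∀ i, ld σ v t (σ t) ≤ ld σ v t i)
    (i0 : Fin n) (hi0 : ld σ v m i0 ≤ 3 / 4) :
    ∃ g, SCheck ι g ∧ ∑ t ∈ range m, g (v t) < n := by
  have hle : ∀ t < m, ld σ v t (σ t) ≤ 3 / 4 := fun t ht =>
    (hσ t ht i0).trans ((ld_mono σ v hv i0 ht.le).trans hi0)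
  by_cases hover : ∃ t, t < m ∧ v t ≤ 3 / 4 ∧ 1 < ld σ v (t + 1) (σ t)
  swap
  · push Not at hover
    refine ⟨gN, gN_check ι, ?_⟩
    have key := inv_step σ (fun T i =>
      (ld σ v T i ≤ 1 ∧ ld σ (fun t => gN (v t)) T i ≤ ld σ v T i) ∨
      (3 / 4 < ld σ v T i ∧ ld σ (fun t => gN (v t)) T i ≤ 1)) 0 m
      (by intro i; left; simp [ld_zero]) (by
        intro T _ hT hI
        have hl := hle T hT
        rw [ld_succ_self, ld_succ_self]
        rcases hI with ⟨h1, h2⟩ | ⟨h1, h2⟩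
        · by_cases hx : v T ≤ 3 / 4
          · left
            have := hover T hT hx
            rw [ld_succ_self] at this
            have e : gN (v T) = v T := by simp [gN, not_lt.2 hx]
            rw [e]
            exact ⟨this, by linarith⟩
          · push Not at hx
            have e : gN (v T) = 1 := by simp [gN, hx]
            right
            rcases fresh σ v hv ha T (σ T) with hf | hf
            · rw [hf, hf, e]; exact ⟨by linarith, by linarith⟩
            · linarith
        · linarith) (by
        intro T _ hT i hne hI
        rwa [ld_succ_ne _ _ _ _ hne, ld_succ_ne _ _ _ _ hne]) m (Nat.zero_le _) le_rfl
    refine finish σ _ m i0 (fun i => ?_) ?_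
    · rcases key i with ⟨h1, h2⟩ | ⟨h1, h2⟩ <;> linarith
    · rcases key i0 with ⟨h1, h2⟩ | ⟨h1, h2⟩ <;> linarith
  -- the last overfull placement
  obtain ⟨τ, ⟨hτm, hs34, hτo⟩, hmax⟩ : ∃ τ, (τ < m ∧ v τ ≤ 3 / 4 ∧ 1 < ld σ v (τ + 1) (σ τ)) ∧
      ∀ t, τ < t → ¬ (t < m ∧ v t ≤ 3 / 4 ∧ 1 < ld σ v (t + 1) (σ t)) := by
    classical
    have hne : ((range m).filter (fun t => v t ≤ 3 / 4 ∧ 1 < ld σ v (t + 1) (σ t))).Nonempty := by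
      obtain ⟨t, h1, h2⟩ := hover
      exact ⟨t, by simp [h1, h2]⟩
    refine ⟨Finset.max' _ hne, ?_, ?_⟩
    · have := Finset.max'_mem _ hne
      rw [mem_filter, mem_range] at this
      exact this
    · intro t ht h
      have := Finset.le_max' ((range m).filter
        (fun t => v t ≤ 3 / 4 ∧ 1 < ld σ v (t + 1) (σ t))) t (by simp [h])
      omega
  rw [ld_succ_self] at hτo
  obtain ⟨s, hs⟩ : ∃ s, s = v τ := ⟨_, rfl⟩
  obtain ⟨a, haa⟩ : ∃ a, a = ld σ v τ (σ τ) := ⟨_, rfl⟩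
  rw [← hs, ← haa] at hτo
  rw [← hs] at hs34
  have ha34 : a ≤ 3 / 4 := haa ▸ hle τ hτm
  have hsa : s ≤ a := by
    rcases fresh σ v hv ha τ (σ τ) with hf | hf
    · rw [hf] at haa; linarith
    · rw [hs, haa]; exact hf
  have hla : ∀ t ≤ τ, ld σ v t (σ t) ≤ a := fun t ht =>
    (hσ t (by omega) (σ τ)).trans (haa ▸ ld_mono σ v hv (σ τ) ht)
  have hga : ∀ i, a ≤ ld σ v (τ + 1) i := fun i =>
    (haa ▸ hσ τ hτm i).trans (ld_mono σ v hv i (Nat.le_succ _))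
  have hvs : ∀ t ≤ τ, s ≤ v t := fun t ht => hs ▸ ha ht
  have hvs' : ∀ t, τ < t → v t ≤ s := fun t ht => hs ▸ ha ht.le
  by_cases hT : ∃ t0 ≤ τ, ld σ v t0 (σ t0) + v t0 ≤ 3 / 4 ∧ v t0 ≤ ld σ v t0 (σ t0)
  · -- thirds
    obtain ⟨t0, ht0, hT1, hT2⟩ := hT
    have hst0 := hvs t0 ht0
    obtain ⟨d, hd⟩ : ∃ d, d = s - 1 / 4 := ⟨_, rfl⟩
    have hd0 : 0 < d := by linarith
    have hd8 : d ≤ 1 / 8 := by linarith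
    obtain ⟨k, hk⟩ : ∃ k, k * d = 1 / 6 := ⟨1 / 6 / d, by field_simp⟩
    have hk0 : 0 ≤ k := by
      by_contra h
      push Not at h
      nlinarith
    have hr : ∀ t ≤ τ, v t ≤ ld σ v t (σ t) → v t ≤ 1 / 2 - d := by
      intro t ht hf
      rcases le_total t t0 with h | h
      · have h1 := hσ t (by omega) (σ t0)
        have h2 := ld_mono σ v hv (σ t0) h
        linarith
      · have := ha h
        linarith
    have gbig : ∀ x, 3 / 4 < x → gT k d x = 1 := by intro x hx; simp [gT, hx]
    have g1 : ∀ x, x ≤ 1 / 2 - d → gT k d x ≤ min (k * x) (1 / 3) := by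
      intro x hx
      have hneg : k * (x - (1 / 2 - d)) ≤ 0 := mul_nonpos_of_nonneg_of_nonpos hk0 (by linarith)
      rw [gT, if_neg (by linarith), max_eq_left ((min_le_left _ _).trans hneg), add_zero]
    have g13 : ∀ x, x ≤ 1 / 2 - d → gT k d x ≤ 1 / 3 := fun x hx => (g1 x hx).trans (min_le_right _ _)
    have gk : ∀ x, x ≤ 1 / 2 - d → gT k d x ≤ k * x := fun x hx => (g1 x hx).trans (min_le_left _ _)
    have g23 : ∀ x, x ≤ 3 / 4 → gT k d x ≤ 2 / 3 := by
      intro x hx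
      rw [gT, if_neg (not_lt.2 hx)]
      have h1 := min_le_right (k * x) (1 / 3)
      have h2 : max 0 (min (k * (x - (1 / 2 - d))) (1 / 3)) ≤ 1 / 3 :=
        max_le (by norm_num) (min_le_right _ _)
      linarith
    refine ⟨gT k d, gT_check ι k d hd0 hd8 hk, ?_⟩
    have key1 := inv_step σ (fun T i =>
      (ld σ v T i = 0 ∧ ld σ (fun t => gT k d (v t)) T i = 0) ∨
      (s ≤ ld σ v T i ∧ ld σ v T i ≤ 3 / 4 ∧
        ld σ (fun t => gT k d (v t)) T i = gT k d (ld σ v T i)) ∨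
      (2 * s ≤ ld σ v T i ∧ ld σ v T i ≤ 3 / 4 ∧ ld σ (fun t => gT k d (v t)) T i ≤ 2 / 3) ∨
      (3 / 4 < ld σ v T i ∧ ld σ (fun t => gT k d (v t)) T i ≤ 1)) 0 (τ + 1)
      (by intro i; left; simp [ld_zero]) (by
        intro T _ hTt hI
        have hTle : T ≤ τ := by omega
        have hl := hle T (by omega)
        have hvT := hvs T hTle
        have hrT := hr T hTle
        rw [ld_succ_self, ld_succ_self]
        rcases hI with ⟨h1, h2⟩ | ⟨h1, h2, h3⟩ | ⟨h1, h2, h3⟩ | ⟨h1, h2⟩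
        · rw [h1, h2, zero_add, zero_add]
          by_cases hx : v T ≤ 3 / 4
          · right; left; exact ⟨hvT, hx, rfl⟩
          · push Not at hx
            right; right; right
            exact ⟨hx, (gbig _ hx).le⟩
        · rcases fresh σ v hv ha T (σ T) with hf | hf
          · rw [hf] at h1; linarith
          · have hr' := hrT hf
            have gr := g13 _ hr'
            by_cases hx : ld σ v T (σ T) + v T ≤ 3 / 4
            · right; right; left
              have := g13 (ld σ v T (σ T)) (by linarith)
              exact ⟨by linarith, hx, by linarith⟩
            · push Not at hx
              have := g23 _ h2
              right; right; right
              exact ⟨hx, by linarith⟩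
        · rcases fresh σ v hv ha T (σ T) with hf | hf
          · rw [hf] at h1; linarith
          · have gr := g13 _ (hrT hf)
            right; right; right
            exact ⟨by linarith, by linarith⟩
        · linarith) (by
        intro T _ hT i hne hI
        rwa [ld_succ_ne _ _ _ _ hne, ld_succ_ne _ _ _ _ hne]) (τ + 1) (Nat.zero_le _) le_rfl
    have key2 := inv_step σ (fun T i =>
      (3 / 4 - d < ld σ v T i ∧ ld σ v T i ≤ 3 / 4 ∧ ld σ (fun t => gT k d (v t)) T i ≤ 2 / 3) ∨
      (3 / 4 - d < ld σ v T i ∧ ld σ v T i ≤ 3 / 4 ∧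
        ld σ (fun t => gT k d (v t)) T i ≤ 2 / 3 + k * (ld σ v T i - (3 / 4 - d)) ∧ v T ≤ d) ∨
      (3 / 4 < ld σ v T i ∧ ld σ (fun t => gT k d (v t)) T i ≤ 1)) (τ + 1) m
      (by
        intro i
        have hg := hga i
        rcases key1 i with ⟨h1, h2⟩ | ⟨h1, h2, h3⟩ | ⟨h1, h2, h3⟩ | ⟨h1, h2⟩
        · linarith
        · left; refine ⟨by linarith, h2, ?_⟩
          rw [h3]; exact g23 _ h2
        · left; exact ⟨by linarith, h2, h3⟩
        · right; right; exact ⟨h1, h2⟩) (by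
        intro T hTa hTm hI
        have hl := hle T hTm
        have hvT := hvs' T (by omega)
        have hv1 := ha (Nat.le_succ T)
        have gr := g13 (v T) (by linarith)
        have gr' := gk (v T) (by linarith)
        rw [ld_succ_self, ld_succ_self]
        have hvT0 := hv T
        rcases hI with ⟨h1, h2, h3⟩ | ⟨h1, h2, h3, h4⟩ | ⟨h1, h2⟩
        · by_cases hx : ld σ v T (σ T) + v T ≤ 3 / 4
          · right; left
            refine ⟨by linarith, hx, ?_, ?_⟩
            · nlinarith
            · exact hv1.trans (by linarith)
          · push Not at hx
            right; right; exact ⟨hx, by linarith⟩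
        · by_cases hx : ld σ v T (σ T) + v T ≤ 3 / 4
          · right; left
            refine ⟨by linarith, hx, ?_, ?_⟩
            · nlinarith
            · exact hv1.trans (by linarith)
          · push Not at hx
            right; right; refine ⟨hx, ?_⟩
            have e1 : k * (ld σ v T (σ T) - (3 / 4 - d)) ≤ k * d :=
              mul_le_mul_of_nonneg_left (by linarith) hk0
            have e2 : k * v T ≤ k * d := mul_le_mul_of_nonneg_left h4 hk0
            linarith
        · linarith) (by
        intro T _ hT i hne hI
        have hv1 := ha (Nat.le_succ T)
        rw [ld_succ_ne _ _ _ _ hne, ld_succ_ne _ _ _ _ hne]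
        rcases hI with h | ⟨h1, h2, h3, h4⟩ | h
        · exact Or.inl h
        · exact Or.inr (Or.inl ⟨h1, h2, h3, hv1.trans h4⟩)
        · exact Or.inr (Or.inr h)) m (by omega) le_rfl
    have hbd : ∀ i, ld σ v m i ≤ 3 / 4 → k * (ld σ v m i - (3 / 4 - d)) ≤ k * d := fun i h =>
      mul_le_mul_of_nonneg_left (by linarith) hk0
    refine finish σ _ m i0 (fun i => ?_) ?_
    · rcases key2 i with ⟨h1, h2, h3⟩ | ⟨h1, h2, h3, h4⟩ | ⟨h1, h2⟩
      · linarith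
      · have := hbd i h2; linarith
      · exact h2
    · rcases key2 i0 with ⟨h1, h2, h3⟩ | ⟨h1, h2, h3, h4⟩ | ⟨h1, h2⟩
      · linarith
      · have := hbd i0 h2; linarith
      · linarith
  · -- halves
    push Not at hT
    have hw : 0 < 1 - a := by linarith
    obtain ⟨b, hb⟩ : ∃ b, b * (1 - a) = 1 / 2 := ⟨1 / 2 / (1 - a), by field_simp⟩
    have hb1 : 1 ≤ b := by
      by_contra h
      push Not at h
      nlinarith
    have hb0 : 0 ≤ b := by linarith
    have gbig : ∀ x, 3 / 4 < x → gH b a x = 1 := by intro x hx; simp [gH, hx]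
    have ghalf : ∀ x, x ≤ a → gH b a x ≤ 1 / 2 := by
      intro x hx
      have hneg : b * (x - a) ≤ 0 := mul_nonpos_of_nonneg_of_nonpos hb0 (by linarith)
      rw [gH, if_neg (by linarith), max_eq_left hneg, add_zero]
      exact min_le_right _ _
    have glin : ∀ x, x ≤ a → gH b a x ≤ b * x := by
      intro x hx
      have hneg : b * (x - a) ≤ 0 := mul_nonpos_of_nonneg_of_nonpos hb0 (by linarith)
      rw [gH, if_neg (by linarith), max_eq_left hneg, add_zero]
      exact min_le_left _ _
    have gtop : ∀ x, a ≤ x → x ≤ 3 / 4 → gH b a x ≤ 1 - b * (1 - x) := by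
      intro x hx hx'
      have hpos : 0 ≤ b * (x - a) := mul_nonneg hb0 (by linarith)
      rw [gH, if_neg (not_lt.2 hx'), max_eq_right hpos]
      have := min_le_right (b * x) (1 / 2)
      nlinarith
    refine ⟨gH b a, gH_check ι b a (by linarith) hb hb1, ?_⟩
    have key1 := inv_step σ (fun T i =>
      (ld σ v T i = 0 ∧ ld σ (fun t => gH b a (v t)) T i = 0) ∨
      (s ≤ ld σ v T i ∧ ld σ v T i ≤ 3 / 4 ∧
        ld σ (fun t => gH b a (v t)) T i = gH b a (ld σ v T i)) ∨
      (3 / 4 < ld σ v T i ∧ ld σ (fun t => gH b a (v t)) T i ≤ 1)) 0 (τ + 1)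
      (by intro i; left; simp [ld_zero]) (by
        intro T _ hTt hI
        have hTle : T ≤ τ := by omega
        have hl := hle T (by omega)
        have hvT := hvs T hTle
        have hrT := hT T hTle
        rw [ld_succ_self, ld_succ_self]
        rcases hI with ⟨h1, h2⟩ | ⟨h1, h2, h3⟩ | ⟨h1, h2⟩
        · rw [h1, h2, zero_add, zero_add]
          by_cases hx : v T ≤ 3 / 4
          · right; left; exact ⟨hvT, hx, rfl⟩
          · push Not at hx
            right; right
            exact ⟨hx, (gbig _ hx).le⟩
        · rcases fresh σ v hv ha T (σ T) with hf | hf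
          · rw [hf] at h1; linarith
          · have hAa := hla T hTle
            have e1 := ghalf _ hAa
            have e2 := ghalf _ (hf.trans hAa)
            right; right
            refine ⟨?_, by linarith⟩
            by_contra hx
            push Not at hx
            have := hrT hx
            linarith
        · linarith) (by
        intro T _ hT i hne hI
        rwa [ld_succ_ne _ _ _ _ hne, ld_succ_ne _ _ _ _ hne]) (τ + 1) (Nat.zero_le _) le_rfl
    have key2 := inv_step σ (fun T i =>
      (a ≤ ld σ v T i ∧ ld σ v T i ≤ 1 ∧
        ld σ (fun t => gH b a (v t)) T i ≤ 1 - b * (1 - ld σ v T i)) ∨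
      (3 / 4 < ld σ v T i ∧ ld σ (fun t => gH b a (v t)) T i ≤ 1)) (τ + 1) m
      (by
        intro i
        have hg := hga i
        rcases key1 i with ⟨h1, h2⟩ | ⟨h1, h2, h3⟩ | ⟨h1, h2⟩
        · linarith
        · left; refine ⟨hg, by linarith, ?_⟩
          rw [h3]; exact gtop _ hg h2
        · right; exact ⟨h1, h2⟩) (by
        intro T hTa hTm hI
        have hl := hle T hTm
        have hvT := hvs' T (by omega)
        have hvT0 := hv T
        have hno : ld σ v (T + 1) (σ T) ≤ 1 := by
          by_contra h
          push Not at h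
          exact hmax T (by omega) ⟨hTm, by linarith, h⟩
        rw [ld_succ_self] at hno
        have gr := glin (v T) (by linarith)
        rw [ld_succ_self, ld_succ_self]
        rcases hI with ⟨h1, h2, h3⟩ | ⟨h1, h2⟩
        · left
          exact ⟨by linarith, hno, by nlinarith⟩
        · linarith) (by
        intro T _ hT i hne hI
        rwa [ld_succ_ne _ _ _ _ hne, ld_succ_ne _ _ _ _ hne]) m (by omega) le_rfl
    refine finish σ _ m i0 (fun i => ?_) ?_
    · rcases key2 i with ⟨h1, h2, h3⟩ | ⟨h1, h2⟩
      · nlinarith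
      · exact h2
    · rcases key2 i0 with ⟨h1, h2, h3⟩ | ⟨h1, h2⟩
      · nlinarith
      · linarith

/-- Every price vector admits an affordable bundle of value at least the APS. -/
lemma aps_bundle {ι : Type*} (b : ℝ) (hb : 0 ≤ b) (w : ι → ℝ) (M : Finset ι)
    (hw : ∀ j ∈ M, 0 ≤ w j) (p : ι → ℝ) (hp : ∀ j ∈ M, 0 ≤ p j) (hp1 : ∑ j ∈ M, p j = 1) :
    ∃ S, S ⊆ M ∧ ∑ j ∈ S, p j ≤ b ∧ APS b (fun S => ∑ j ∈ S, w j) M ≤ ∑ j ∈ S, w j := by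
  classical
  have hfin : ∀ p : ι → ℝ,
      {u : ℝ | ∃ S, S ⊆ M ∧ (∑ j ∈ S, p j) ≤ b ∧ u = ∑ j ∈ S, w j}.Finite := by
    intro p
    refine (M.powerset.finite_toSet.image (fun S => ∑ j ∈ S, w j)).subset ?_
    rintro u ⟨S, hS, -, rfl⟩
    exact ⟨S, by simpa using hS, rfl⟩
  have hne : ∀ p : ι → ℝ,
      {u : ℝ | ∃ S, S ⊆ M ∧ (∑ j ∈ S, p j) ≤ b ∧ u = ∑ j ∈ S, w j}.Nonempty :=
    fun p => ⟨0, ∅, by simp, by simpa using hb, by simp⟩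
  obtain ⟨S, hS, hSb, hSv⟩ := (hne p).csSup_mem (hfin p)
  refine ⟨S, hS, hSb, ?_⟩
  rw [← hSv]
  refine csInf_le ⟨0, ?_⟩ ⟨p, hp, hp1, rfl⟩
  rintro t ⟨q, -, -, rfl⟩
  exact le_csSup (hfin q).bddAbove ⟨∅, by simp, by simpa using hb, by simp⟩

lemma aps_price {ι : Type*} (hn : 0 < n) (w : ι → ℝ) (M : Finset ι)
    (hw : ∀ j ∈ M, 0 ≤ w j) (z : ℝ) (hz : z = APS (1 / (n : ℝ)) (fun S => ∑ j ∈ S, w j) M)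
    (hz0 : 0 < z) (g : ℝ → ℝ) (hg : SCheck ι g) : (n : ℝ) ≤ ∑ j ∈ M, g (w j / z) := by
  classical
  have hnR : (0 : ℝ) < n := by exact_mod_cast hn
  have hb : (0 : ℝ) ≤ 1 / n := by positivity
  have hMne : M.Nonempty := by
    by_contra h
    rw [not_nonempty_iff_eq_empty] at h
    subst h
    simp [APS] at hz
    linarith
  have hpass : ∀ S ⊆ M, z ≤ ∑ j ∈ S, w j → 1 ≤ ∑ j ∈ S, g (w j / z) := by
    intro S hS h
    refine hg.2 S (fun j => w j / z) (fun j hj => div_nonneg (hw j (hS hj)) hz0.le) ?_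
    rw [← sum_div, le_div_iff₀ hz0]
    linarith
  have hg0 : ∀ j ∈ M, 0 ≤ g (w j / z) := fun j hj => hg.1 _ (div_nonneg (hw j hj) hz0.le)
  have hM1 : 1 ≤ ∑ j ∈ M, g (w j / z) := by
    apply hpass M Subset.rfl
    obtain ⟨j0, hj0⟩ := hMne
    obtain ⟨S, hS, -, h⟩ := aps_bundle (1 / n) hb w M hw (fun j => if j = j0 then 1 else 0)
      (by intro j _; split_ifs <;> norm_num) (by simp [hj0])
    rw [← hz] at h
    exact h.trans (sum_le_sum_of_subset_of_nonneg hS (fun j hj _ => hw j hj))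
  have hP : 0 < ∑ j ∈ M, g (w j / z) := by linarith
  obtain ⟨S, hS, hSb, h⟩ := aps_bundle (1 / n) hb w M hw
    (fun j => g (w j / z) / ∑ j ∈ M, g (w j / z))
    (fun j hj => div_nonneg (hg0 j hj) hP.le) (by rw [← sum_div, div_self hP.ne'])
  rw [← hz] at h
  have h1 := hpass S hS h
  rw [← sum_div, div_le_div_iff₀ hP hnR] at hSb
  nlinarith

end APSProof

open APSProof in
theorem identical_valuations_three_quarters_aps {ι : Type*} [DecidableEq ι] (n : ℕ)
    (hn : 0 < n) (M : Finset ι) (w : ι → ℝ) (hw : ∀ j ∈ M, 0 ≤ w j)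
    (hAPS : 0 < APS (1 / (n : ℝ)) (fun S => ∑ j ∈ S, w j) M) :
    ∃ A : Fin n → Finset ι, IsPartition M A ∧
      ∀ i, (3 / 4) * APS (1 / (n : ℝ)) (fun S => ∑ j ∈ S, w j) M < ∑ j ∈ A i, w j := by
  obtain ⟨z, hz⟩ : ∃ z, z = APS (1 / (n : ℝ)) (fun S => ∑ j ∈ S, w j) M := ⟨_, rfl⟩
  rw [← hz] at hAPS ⊢
  obtain ⟨m, hm⟩ : ∃ m, m = M.card := ⟨_, rfl⟩
  -- sorted enumeration
  obtain ⟨e, he⟩ : ∃ e : Fin m ≃ M, Antitone (fun t => w (e t)) := by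
    let e0 : Fin m ≃ M := (M.equivFinOfCardEq hm.symm).symm
    refine ⟨(Tuple.sort (fun t => - w (e0 t))).trans e0, ?_⟩
    intro a b hab
    have := Tuple.monotone_sort (fun t => - w (e0 t)) hab
    simpa using this
  let v : ℕ → ℝ := fun t => if h : t < m then w (e ⟨t, h⟩) / z else 0
  have hvt : ∀ t : Fin m, v t = w (e t) / z := fun t => by simp [v]
  have hv0 : ∀ t, 0 ≤ v t := by
    intro t
    by_cases h : t < m
    · simp only [v, h, dif_pos]
      exact div_nonneg (hw _ (e ⟨t, h⟩).2) hAPS.le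
    · simp [v, h]
  have hva : Antitone v := by
    intro a b hab
    by_cases h : b < m
    · have h' : a < m := by omega
      simp only [v, h, h', dif_pos]
      have : w (e ⟨b, h⟩) ≤ w (e ⟨a, h'⟩) := he (by simpa using hab)
      gcongr
    · have : v b = 0 := by simp [v, h]
      rw [this]; exact hv0 a
  have hsum : ∀ F : ℝ → ℝ, ∑ t ∈ range m, F (v t) = ∑ j ∈ M, F (w j / z) := by
    intro F
    rw [← Fin.sum_univ_eq_sum_range (fun t => F (v t)) m, ← sum_coe_sort M]
    rw [← e.sum_comp]
    exact sum_congr rfl (fun t _ => by rw [hvt])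
  obtain ⟨σ, hσ⟩ := exists_greedy hn v m
  have hgood : ∀ i, 3 / 4 < ld σ v m i := by
    intro i
    by_contra h
    push Not at h
    obtain ⟨g, hg, hlt⟩ := core ι v hv0 hva m σ hσ i h
    have := aps_price hn w M hw z hz hAPS g hg
    rw [hsum g] at hlt
    linarith
  refine ⟨fun i => (univ.filter (fun t : Fin m => σ t = i)).image (fun t => (e t : ι)),
    ⟨?_, ?_, ?_⟩, ?_⟩
  · intro i x hx
    obtain ⟨t, -, rfl⟩ := mem_image.1 hx
    exact (e t).2
  · intro i j hij
    rw [disjoint_left]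
    intro x hx hx'
    obtain ⟨t, ht, rfl⟩ := mem_image.1 hx
    obtain ⟨t', ht', h⟩ := mem_image.1 hx'
    have : t' = t := e.injective (Subtype.ext h)
    subst this
    simp only [mem_filter] at ht ht'
    exact hij (ht.2.symm.trans ht'.2)
  · intro x hx
    refine ⟨σ (e.symm ⟨x, hx⟩), mem_image.2 ⟨e.symm ⟨x, hx⟩, by simp, by simp⟩⟩
  · intro i
    have h := hgood i
    rw [sum_image (fun a _ b _ hab => e.injective (Subtype.ext hab))]
    have h2 : ld σ v m i = (∑ t ∈ univ.filter (fun t : Fin m => σ t = i), w (e t)) / z := by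
      unfold ld
      rw [sum_filter, sum_filter, sum_div,
        ← Fin.sum_univ_eq_sum_range (fun t => if σ t = i then v t else 0) m]
      refine sum_congr rfl (fun t _ => ?_)
      rw [hvt]
      split_ifs <;> simp
    rw [h2, lt_div_iff₀ hAPS] at h
    exact h
end
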